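/- arXiv:1409.3142 — 8 statements merged into one kernel-verified Lean document; each statement's English description precedes it below -/
import Mathlib

section
/- For Ω ∈ Ω^N, k ≥ 2 and v_1,…,v_k ∈ 𝔛, define the Lie derivative along the multivector V = v_1∧⋯∧v_k by 𝓛_V Ω := d(ι(V)Ω) − (−1)^k·ι(V)(dΩ). Then (−1)^k·𝓛_V Ω = Σ_{1≤i<j≤k} (−1)^{i+j}·ι([v_i,v_j]∧v_1∧⋯∧v̂_i∧⋯∧v̂_j∧⋯∧v_k)Ω + Σ_{i=1}^{k} (−1)^i·ι(v_1∧⋯∧v̂_i∧⋯∧v_k)(𝓛_{v_i}Ω), where hats denote omitted entries. -/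
/-- Cartan calculus data over ℝ: a module `carrier` with graded pieces `deg i`
(`deg i = ⊥` for `i < 0`), a degree-`+1` differential `d` squaring to zero,
a real Lie algebra `X`, contractions `ι v` of degree `-1` depending linearly on `v`,
pairwise anticommuting, and satisfying the Cartan relation
`𝓛_v ∘ ι_w - ι_w ∘ 𝓛_v = ι_[v,w]` where `𝓛_v = d ∘ ι_v + ι_v ∘ d`. -/
structure CartanCalculus where
  carrier : Type
  [addCommGroup : AddCommGroup carrier]
  [module : Module ℝ carrier]
  deg : ℤ → Submodule ℝ carrier
  deg_neg : ∀ i : ℤ, i < 0 → deg i = ⊥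
  d : carrier →ₗ[ℝ] carrier
  d_deg : ∀ i : ℤ, ∀ a ∈ deg i, d a ∈ deg (i + 1)
  d_d : ∀ a : carrier, d (d a) = 0
  X : Type
  [lieRingX : LieRing X]
  [lieAlgebraX : LieAlgebra ℝ X]
  ι : X →ₗ[ℝ] carrier →ₗ[ℝ] carrier
  ι_deg : ∀ (v : X) (i : ℤ), ∀ a ∈ deg i, ι v a ∈ deg (i - 1)
  ι_ι : ∀ (v w : X) (a : carrier), ι v (ι w a) = - ι w (ι v a)
  cartan : ∀ (v w : X) (a : carrier),
      (d (ι v (ι w a)) + ι v (d (ι w a))) - ι w (d (ι v a) + ι v (d a)) = ι ⁅v, w⁆ a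

attribute [instance] CartanCalculus.addCommGroup CartanCalculus.module
  CartanCalculus.lieRingX CartanCalculus.lieAlgebraX

namespace CartanCalculus

/-- The Lie derivative `𝓛_v = d ∘ ι_v + ι_v ∘ d`. -/
def L (C : CartanCalculus) (v : C.X) : C.carrier →ₗ[ℝ] C.carrier :=
  C.d ∘ₗ C.ι v + C.ι v ∘ₗ C.d

/-- Iterated contraction: `iotaL [v₁, …, v_k] = ι_{v_k} ∘ ⋯ ∘ ι_{v₁}`, i.e. the
contraction `ι(v₁ ∧ ⋯ ∧ v_k)` (`ι_{v₁}` acts first). -/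
def iotaL (C : CartanCalculus) : List C.X → C.carrier →ₗ[ℝ] C.carrier
  | [] => LinearMap.id
  | v :: vs => (C.iotaL vs).comp (C.ι v)

end CartanCalculus

/-- Interpret a list as a `Fin k`-tuple (junk value `0` out of range). -/
def listToFun {α : Type} [Zero α] (k : ℕ) (l : List α) : Fin k → α :=
  fun m => l.getD m.val 0

/-- A map `𝔤^k → W` is multilinear. -/
def IsMultilinear {𝔤 : Type} [AddCommGroup 𝔤] [Module ℝ 𝔤] {W : Type}
    [AddCommGroup W] [Module ℝ W] {k : ℕ} (ψ : (Fin k → 𝔤) → W) : Prop :=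
  ∀ (x : Fin k → 𝔤) (i : Fin k),
    (∀ a b : 𝔤, ψ (Function.update x i (a + b))
        = ψ (Function.update x i a) + ψ (Function.update x i b)) ∧
    (∀ (c : ℝ) (a : 𝔤), ψ (Function.update x i (c • a)) = c • ψ (Function.update x i a))

/-- A map `𝔤^k → W` is alternating. -/
def IsAlternating {𝔤 : Type} {W : Type} [AddCommGroup W] {k : ℕ}
    (ψ : (Fin k → 𝔤) → W) : Prop :=
  ∀ (x : Fin k → 𝔤) (i j : Fin k), i ≠ j → x i = x j → ψ x = 0

/-- The Chevalley–Eilenberg differential of a `k`-cochain `ψ`: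
`(d_𝔤 ψ)(x₁,…,x_{k+1}) = Σ_{i<j} (-1)^{i+j} ψ([x_i,x_j], x₁, …, x̂_i, …, x̂_j, …, x_{k+1})`
(signs written for 1-based indices, as in the paper). -/
def dCE {𝔤 : Type} [LieRing 𝔤] [LieAlgebra ℝ 𝔤] {W : Type} [AddCommGroup W]
    [Module ℝ W] (k : ℕ) (ψ : (Fin k → 𝔤) → W) : (Fin (k + 1) → 𝔤) → W :=
  fun x => ∑ i : Fin (k + 1), ∑ j : Fin (k + 1),
    if (i : ℕ) < (j : ℕ) then
      ((-1 : ℝ) ^ ((i : ℕ) + (j : ℕ))) •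
        ψ (listToFun k (⁅x i, x j⁆ :: (((List.ofFn x).eraseIdx (j : ℕ)).eraseIdx (i : ℕ))))
    else 0

namespace CartanCalculus

/-- `σ_k(x₁,…,x_k) = ι(v_{x₁} ∧ ⋯ ∧ v_{x_k}) σ` where `v_x = ρ x`. -/
def lower (C : CartanCalculus) {𝔤 : Type} [LieRing 𝔤] [LieAlgebra ℝ 𝔤]
    (ρ : 𝔤 →ₗ⁅ℝ⁆ C.X) (k : ℕ) (σ : C.carrier) : (Fin k → 𝔤) → C.carrier :=
  fun x => C.iotaL (List.ofFn (fun i => ρ (x i))) σ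

/-- `F_k(x₁,…,x_k) = ι(v_{x₁} ∧ ⋯ ∧ v_{x_{k-1}}) (F x_k)`, with `F₀ := 0`. -/
def lowerF (C : CartanCalculus) {𝔤 : Type} [LieRing 𝔤] [LieAlgebra ℝ 𝔤]
    (ρ : 𝔤 →ₗ⁅ℝ⁆ C.X) (F : 𝔤 → C.carrier) : (k : ℕ) → (Fin k → 𝔤) → C.carrier
  | 0 => fun _ => 0
  | (k + 1) => fun x =>
      C.iotaL (List.ofFn (fun i : Fin k => ρ (x i.castSucc))) (F (x (Fin.last k)))

end CartanCalculus

/-- `ς(k) = -(-1)^{k(k+1)/2}`. -/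
def varsigma (k : ℕ) : ℝ := -((-1 : ℝ) ^ (k * (k + 1) / 2))

/-- A homotopy moment map for the invariant closed form `ω ∈ Ω^{n+1}`
(componentwise form of Def. 5.1 in [FRZ]): a family of alternating multilinear maps
`f_k : 𝔤^k → Ω^{n-k}` (`k = 1, …, n`) satisfying the moment map equations. -/
def IsMomentMap (C : CartanCalculus) {𝔤 : Type} [LieRing 𝔤] [LieAlgebra ℝ 𝔤]
    (ρ : 𝔤 →ₗ⁅ℝ⁆ C.X) (n : ℕ) (ω : C.carrier)
    (f : (k : ℕ) → (Fin k → 𝔤) → C.carrier) : Prop :=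
  (∀ k : ℕ, 1 ≤ k → k ≤ n →
      IsMultilinear (f k) ∧ IsAlternating (f k) ∧ ∀ x, f k x ∈ C.deg ((n : ℤ) - (k : ℤ))) ∧
  (∀ x : 𝔤, C.d (f 1 (fun _ => x)) = - C.ι (ρ x) ω) ∧
  (∀ k : ℕ, 2 ≤ k → k ≤ n → ∀ x : Fin k → 𝔤,
      (∑ i : Fin k, ∑ j : Fin k,
        if (i : ℕ) < (j : ℕ) then
          ((-1 : ℝ) ^ ((i : ℕ) + (j : ℕ) + 1)) •
            f (k - 1) (listToFun (k - 1)
              (⁅x i, x j⁆ :: (((List.ofFn x).eraseIdx (j : ℕ)).eraseIdx (i : ℕ))))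
        else 0)
      = C.d (f k x) + varsigma k • C.lower ρ k ω x) ∧
  (∀ x : Fin (n + 1) → 𝔤,
      (∑ i : Fin (n + 1), ∑ j : Fin (n + 1),
        if (i : ℕ) < (j : ℕ) then
          ((-1 : ℝ) ^ ((i : ℕ) + (j : ℕ) + 1)) •
            f n (listToFun n
              (⁅x i, x j⁆ :: (((List.ofFn x).eraseIdx (j : ℕ)).eraseIdx (i : ℕ))))
        else 0)
      = varsigma (n + 1) • C.lower ρ (n + 1) ω x)

theorem lie_mv_aux (C : CartanCalculus) (k : ℕ) : ∀ (a : C.carrier) (v : Fin k → C.X),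
    ((-1 : ℝ) ^ k) • C.d (C.iotaL (List.ofFn v) a) - C.iotaL (List.ofFn v) (C.d a)
      = (∑ i : Fin k, ∑ j : Fin k,
          if (i : ℕ) < (j : ℕ) then
            ((-1 : ℝ) ^ ((i : ℕ) + (j : ℕ))) •
              C.iotaL (⁅v i, v j⁆ :: (((List.ofFn v).eraseIdx (j : ℕ)).eraseIdx (i : ℕ))) a
          else 0)
        + (∑ i : Fin k,
            ((-1 : ℝ) ^ ((i : ℕ) + 1)) •
              C.iotaL ((List.ofFn v).eraseIdx (i : ℕ)) (C.L (v i) a)) := by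
  induction k with
  | zero => intro a v; simp [CartanCalculus.iotaL]
  | succ n ih =>
    intro a v
    have h := ih (C.ι (v 0) a) (fun i => v i.succ)
    have hL : ∀ w, C.L w (C.ι (v 0) a) = C.ι (v 0) (C.L w a) - C.ι ⁅v 0, w⁆ a := by
      intro w
      have h1 := C.cartan w (v 0) a
      rw [← lie_skew, map_neg, LinearMap.neg_apply] at h1
      simp only [CartanCalculus.L, LinearMap.add_apply, LinearMap.comp_apply]
      rw [sub_eq_iff_eq_add] at h1
      rw [h1]; abel
    have hsw : ∀ (x : C.X) (l : List C.X), C.iotaL (x :: v 0 :: l) a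
        = - C.iotaL (x :: l) (C.ι (v 0) a) := by
      intro x l
      simp only [CartanCalculus.iotaL, LinearMap.comp_apply]
      rw [C.ι_ι, map_neg]
    have h0 : C.L (v 0) a = C.d (C.ι (v 0) a) + C.ι (v 0) (C.d a) := rfl
    have hc : ∀ (x : C.X) (l : List C.X) (b : C.carrier),
      C.iotaL (x :: l) b = C.iotaL l (C.ι x b) := fun _ _ _ => rfl
    have e2 : ∀ i j : ℕ, ((-1 : ℝ)) ^ (i + 1 + (j + 1)) = (-1) ^ (i + j) := by
      intro i j; ring
    simp only [hL] at h
    simp only [Fin.sum_univ_succ, List.ofFn_succ, Fin.val_zero, Fin.val_succ,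
      List.eraseIdx_cons_succ, List.eraseIdx_cons_zero, lt_self_iff_false, if_false,
      Nat.succ_pos, if_true, Nat.not_lt_zero, zero_add, add_lt_add_iff_right, hsw, e2, smul_neg]
    have e3 : ∀ (p : Prop) [Decidable p] (x : C.carrier),
        (if p then -x else 0) = -(if p then x else 0) := by
      intro p _ x; split_ifs <;> simp
    simp only [e3, Finset.sum_neg_distrib]
    simp only [map_sub, smul_sub, Finset.sum_sub_distrib] at h
    simp only [hc, h0, map_add, pow_succ, mul_neg, mul_one, neg_smul, neg_neg,
      Finset.sum_neg_distrib, pow_zero, one_smul, smul_add, Finset.sum_add_distrib] at h ⊢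
    rw [sub_eq_iff_eq_add] at h
    rw [h]
    abel

/-- For `Ω ∈ Ω^N`, `k ≥ 2` and `V = v₁∧⋯∧v_k`, with
`𝓛_V Ω := d(ι(V)Ω) - (-1)^k ι(V)(dΩ)`, one has
`(-1)^k 𝓛_V Ω = Σ_{i<j} (-1)^{i+j} ι([v_i,v_j]∧v₁∧⋯∧v̂_i∧⋯∧v̂_j∧⋯∧v_k)Ω
 + Σ_i (-1)^i ι(v₁∧⋯∧v̂_i∧⋯∧v_k)(𝓛_{v_i}Ω)` (signs for 1-based indices). -/
theorem lie_derivative_along_multivector (C : CartanCalculus) (N : ℤ) (a : C.carrier)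
    (ha : a ∈ C.deg N) (k : ℕ) (hk : 2 ≤ k) (v : Fin k → C.X) :
    ((-1 : ℝ) ^ k) •
        (C.d (C.iotaL (List.ofFn v) a) - ((-1 : ℝ) ^ k) • C.iotaL (List.ofFn v) (C.d a))
      = (∑ i : Fin k, ∑ j : Fin k,
          if (i : ℕ) < (j : ℕ) then
            ((-1 : ℝ) ^ ((i : ℕ) + (j : ℕ))) •
              C.iotaL (⁅v i, v j⁆ :: (((List.ofFn v).eraseIdx (j : ℕ)).eraseIdx (i : ℕ))) a
          else 0)
        + (∑ i : Fin k,
            ((-1 : ℝ) ^ ((i : ℕ) + 1)) •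
              C.iotaL ((List.ofFn v).eraseIdx (i : ℕ)) (C.L (v i) a)) := by
  have h := lie_mv_aux C k a v
  rw [← h, smul_sub, smul_smul, ← mul_pow]
  simp
end

section
/- (The tilde map is a chain map) Let N ≥ 0 and let σ ∈ Ω^N be invariant. Then d(σ_1(x)) = −(dσ)_1(x) for all x ∈ 𝔤, and for every k ≥ 2 and all x_1,…,x_k ∈ 𝔤: (−1)^k·d(σ_k(x_1,…,x_k)) = (d_𝔤 σ_{k−1})(x_1,…,x_k) + (dσ)_k(x_1,…,x_k), where (dσ)_k is the construction σ ↦ σ_k applied to dσ ∈ Ω^{N+1}. Equivalently, setting σ̃ := Σ_{k≥1} (−1)^{k−1}σ_k, the assignment σ ↦ σ̃ intertwines d with the total differential d_tot acting on a family (ψ_k) of multilinear maps 𝔤^k → Ω by d_𝔤ψ_k + (−1)^k dψ_k, i.e., d_tot(σ̃) = (dσ)~. -/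
namespace CartanCalculus

theorem iotaL_append' (C : CartanCalculus) (l : List C.X) (y : C.X) (a : C.carrier) :
    C.iotaL (l ++ [y]) a = C.ι y (C.iotaL l a) := by
  induction l generalizing a with
  | nil => rfl
  | cons v l ih => exact ih _

theorem iotaL_cons' (C : CartanCalculus) (l : List C.X) (y : C.X) (a : C.carrier) :
    C.iotaL (y :: l) a = C.iotaL l (C.ι y a) := rfl

theorem L_ι (C : CartanCalculus) (y v : C.X) (a : C.carrier) :
    C.L y (C.ι v a) = C.ι v (C.L y a) - C.ι ⁅v, y⁆ a := by
  have h := C.cartan y v a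
  rw [← lie_skew, map_neg, LinearMap.neg_apply, sub_eq_iff_eq_add] at h
  simp only [L, LinearMap.add_apply, LinearMap.comp_apply]
  rw [h]; abel

theorem L_iotaL (C : CartanCalculus) (y : C.X) (n : ℕ) (x : Fin n → C.X) (a : C.carrier) :
    C.L y (C.iotaL (List.ofFn x) a) = C.iotaL (List.ofFn x) (C.L y a)
      - ∑ i : Fin n, ((-1 : ℝ) ^ (i : ℕ)) •
          C.iotaL (⁅x i, y⁆ :: (List.ofFn x).eraseIdx (i : ℕ)) a := by
  induction n generalizing a with
  | zero => simp [iotaL]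
  | succ n ih =>
    rw [List.ofFn_succ, iotaL_cons', ih, L_ι, Fin.sum_univ_succ, iotaL_cons', map_sub]
    have : ∀ i : Fin n, ((-1 : ℝ) ^ ((i.succ : Fin (n+1)) : ℕ)) •
          C.iotaL (⁅x i.succ, y⁆ ::
            (x 0 :: List.ofFn fun i : Fin n => x i.succ).eraseIdx ((i.succ : Fin (n+1)) : ℕ)) a
        = ((-1 : ℝ) ^ (i : ℕ)) •
          C.iotaL (⁅x i.succ, y⁆ :: (List.ofFn fun i : Fin n => x i.succ).eraseIdx (i : ℕ))
            (C.ι (x 0) a) := by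
      intro i
      simp only [Fin.val_succ, List.eraseIdx_cons_succ, iotaL_cons', pow_succ]
      rw [C.ι_ι (x 0)]
      simp
    rw [Finset.sum_congr rfl fun i _ => this i]
    simp only [Fin.val_zero, pow_zero, one_smul, List.eraseIdx_cons_zero, iotaL_cons']
    abel

theorem main_aux (C : CartanCalculus) (σ : C.carrier) (k : ℕ) (v : Fin (k + 1) → C.X)
    (hv : ∀ i, C.L (v i) σ = 0) :
    ((-1 : ℝ) ^ (k + 1)) • C.d (C.iotaL (List.ofFn v) σ)
      = (∑ i : Fin (k + 1), ∑ j : Fin (k + 1),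
          if (i : ℕ) < (j : ℕ) then ((-1 : ℝ) ^ ((i : ℕ) + (j : ℕ))) •
            C.iotaL (⁅v i, v j⁆ :: (((List.ofFn v).eraseIdx (j : ℕ)).eraseIdx (i : ℕ))) σ
          else 0) + C.iotaL (List.ofFn v) (C.d σ) := by
  induction k with
  | zero =>
    have h := hv 0
    simp only [L, LinearMap.add_apply, LinearMap.comp_apply] at h
    simp [iotaL]
    exact neg_eq_of_add_eq_zero_right h
  | succ k ih =>
    have ih' := ih (fun i => v i.castSucc) (fun i => hv _)
    have hL := C.L_iotaL (v (Fin.last _)) (k+1) (fun i => v i.castSucc) σ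
    rw [hv, map_zero, zero_sub] at hL
    rw [Fin.sum_univ_castSucc]
    have hlast : (∑ j : Fin (k + 1 + 1),
          if ((Fin.last (k+1) : Fin (k+1+1)) : ℕ) < (j : ℕ) then
            ((-1 : ℝ) ^ (((Fin.last (k+1) : Fin (k+1+1)) : ℕ) + (j : ℕ))) •
            C.iotaL (⁅v (Fin.last (k+1)), v j⁆ :: (((List.ofFn v).eraseIdx (j : ℕ)).eraseIdx
              ((Fin.last (k+1) : Fin (k+1+1)) : ℕ))) σ
          else 0) = 0 := by
      apply Finset.sum_eq_zero
      intro j _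
      rw [if_neg]
      simp only [Fin.val_last]; omega
    rw [hlast, add_zero]
    have hv' : List.ofFn v = (List.ofFn fun i : Fin (k+1) => v i.castSucc) ++ [v (Fin.last _)] := by
      rw [List.ofFn_succ_last]
    simp only [Fin.sum_univ_castSucc (n := k + 1), Finset.sum_add_distrib]
    rw [hv']
    generalize v (Fin.last _) = y at *
    generalize hw : (fun i : Fin (k+1) => v i.castSucc) = w at *
    have hw' : ∀ i : Fin (k+1), v i.castSucc = w i := fun i => by rw [← hw]
    simp only [hw', Fin.val_castSucc, Fin.val_last] at *
    set l := List.ofFn w with hl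
    have hlen : l.length = k + 1 := by simp [hl]
    have e1 : ∀ i j : Fin (k+1), (if (i : ℕ) < (j : ℕ) then ((-1 : ℝ) ^ ((i : ℕ) + (j : ℕ))) •
            C.iotaL (⁅w i, w j⁆ :: (((l ++ [y]).eraseIdx (j : ℕ)).eraseIdx (i : ℕ))) σ
          else 0) = C.ι y (if (i : ℕ) < (j : ℕ) then ((-1 : ℝ) ^ ((i : ℕ) + (j : ℕ))) •
            C.iotaL (⁅w i, w j⁆ :: ((l.eraseIdx (j : ℕ)).eraseIdx (i : ℕ))) σ
          else 0) := by
      intro i j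
      split_ifs with h
      · rw [List.eraseIdx_append_of_lt_length (by omega), List.eraseIdx_append_of_lt_length
          (by rw [List.length_eraseIdx_of_lt (by omega)]; omega), ← List.cons_append,
          iotaL_append', map_smul]
      · simp
    have e2 : ∀ i : Fin (k+1), (if (i : ℕ) < k + 1 then ((-1 : ℝ) ^ ((i : ℕ) + (k + 1))) •
            C.iotaL (⁅w i, y⁆ :: (((l ++ [y]).eraseIdx (k + 1)).eraseIdx (i : ℕ))) σ
          else 0) = ((-1 : ℝ) ^ (k + 1)) • ((-1 : ℝ) ^ (i : ℕ)) •
            C.iotaL (⁅w i, y⁆ :: (l.eraseIdx (i : ℕ))) σ := by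
      intro i
      rw [if_pos i.2, List.eraseIdx_append_of_length_le (by omega), smul_smul, pow_add, mul_comm]
      simp [hlen]
    simp only [e1, e2]
    simp only [← map_sum, ← Finset.smul_sum]
    rw [← sub_eq_iff_eq_add] at ih'
    rw [← ih', iotaL_append', iotaL_append']
    rw [eq_comm, neg_eq_iff_eq_neg] at hL
    simp only [L, LinearMap.add_apply, LinearMap.comp_apply] at hL
    rw [hL]
    simp only [map_sub, map_neg, map_smul, pow_succ, mul_neg, mul_one, neg_smul, smul_neg, smul_add, neg_neg]
    abel

theorem lower_listToFun (C : CartanCalculus) {𝔤 : Type} [LieRing 𝔤] [LieAlgebra ℝ 𝔤]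
    (ρ : 𝔤 →ₗ⁅ℝ⁆ C.X) (k : ℕ) (σ : C.carrier) (l : List 𝔤) (hl : l.length = k) :
    C.lower ρ k σ (listToFun k l) = C.iotaL (l.map ρ) σ := by
  unfold lower listToFun
  congr 2
  subst hl
  apply List.ext_getElem
  · simp
  · intro i h1 h2
    simp at h1 h2
    simp [h2]

end CartanCalculus



/-- the tilde map is a chain map, Lemma 2.3 of the paper.
For invariant `σ ∈ Ω^N` (`N ≥ 0`): `d(σ₁ x) = -(dσ)₁ x` for all `x ∈ 𝔤`, and for
every `k ≥ 2` (written `k+1` with `k ≥ 1`) and all `x₁,…,x_{k+1} ∈ 𝔤`: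
`(-1)^{k+1} d(σ_{k+1}(x)) = (d_𝔤 σ_k)(x) + (dσ)_{k+1}(x)`; equivalently
`d_tot σ̃ = (dσ)~`. -/
theorem tilde_chain_map (C : CartanCalculus) {𝔤 : Type} [LieRing 𝔤] [LieAlgebra ℝ 𝔤]
    (ρ : 𝔤 →ₗ⁅ℝ⁆ C.X) (N : ℤ) (hN : 0 ≤ N) (σ : C.carrier) (hσ : σ ∈ C.deg N)
    (hinv : ∀ x : 𝔤, C.L (ρ x) σ = 0) :
    (∀ x : 𝔤, C.d (C.ι (ρ x) σ) = - C.ι (ρ x) (C.d σ)) ∧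
    (∀ k : ℕ, 1 ≤ k → ∀ x : Fin (k + 1) → 𝔤,
      ((-1 : ℝ) ^ (k + 1)) • C.d (C.lower ρ (k + 1) σ x)
        = dCE k (C.lower ρ k σ) x + C.lower ρ (k + 1) (C.d σ) x) := by
  refine ⟨fun x => ?_, fun k _ x => ?_⟩
  · have h := hinv x
    simp only [CartanCalculus.L, LinearMap.add_apply, LinearMap.comp_apply] at h
    exact eq_neg_of_add_eq_zero_left h
  · have h := C.main_aux σ k (fun i => ρ (x i)) (fun i => hinv _)
    unfold dCE
    refine h.trans ?_
    congr 1
    refine Finset.sum_congr rfl fun i _ => Finset.sum_congr rfl fun j _ => ?_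
    split_ifs with hij
    · rw [C.lower_listToFun]
      · simp [← List.eraseIdx_map, List.map_ofFn, Function.comp_def]
      · have := j.2
        rw [List.length_cons, List.length_eraseIdx_of_lt, List.length_eraseIdx_of_lt] <;>
          simp [List.length_eraseIdx] <;> (try split_ifs) <;> omega
    · rfl
end

section
/- (ω̃ is d_tot-closed) One has d(ω_1(x)) = 0 for every x ∈ 𝔤; (d_𝔤 ω_{k−1})(x_1,…,x_k) = (−1)^k·d(ω_k(x_1,…,x_k)) for every 2 ≤ k ≤ n+1 and all x_1,…,x_k ∈ 𝔤; and d_𝔤 ω_{n+1} = 0. Equivalently, ω̃ := Σ_{k=1}^{n+1} (−1)^{k−1}ω_k is closed for the total differential d_tot acting on a family (ψ_k) of multilinear maps 𝔤^k → Ω by d_𝔤ψ_k + (−1)^k dψ_k. -/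
theorem aux_lie (C : CartanCalculus) (v : C.X) : ∀ (m : ℕ) (x : Fin m → C.X) (a : C.carrier),
    C.L v (C.iotaL (List.ofFn x) a) = C.iotaL (List.ofFn x) (C.L v a) +
      ∑ i : Fin m, ((-1 : ℝ) ^ (i : ℕ)) •
        C.iotaL (⁅v, x i⁆ :: (List.ofFn x).eraseIdx (i : ℕ)) a := by
  intro m
  induction m with
  | zero => intro x a; simp [CartanCalculus.iotaL]
  | succ m ih =>
    intro x a
    have hc : C.L v (C.ι (x 0) a) = C.ι (x 0) (C.L v a) + C.ι ⁅v, x 0⁆ a := by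
      rw [← C.cartan v (x 0) a]
      simp [CartanCalculus.L]
    rw [List.ofFn_succ, Fin.sum_univ_succ]
    simp only [CartanCalculus.iotaL, LinearMap.comp_apply, ih, hc, map_add, Fin.val_zero,
      pow_zero, one_smul, List.eraseIdx_cons_zero, Fin.val_succ, List.eraseIdx_cons_succ]
    rw [add_assoc]
    congr 2
    refine Finset.sum_congr rfl fun i _ => ?_
    rw [C.ι_ι ⁅v, x i.succ⁆ (x 0) a, map_neg, pow_succ]
    simp

theorem aux_snoc (C : CartanCalculus) (v : C.X) : ∀ (l : List C.X) (a : C.carrier),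
    C.iotaL (l ++ [v]) a = C.ι v (C.iotaL l a) := by
  intro l
  induction l with
  | nil => intro a; simp [CartanCalculus.iotaL]
  | cons w l ih => intro a; simp [CartanCalculus.iotaL, ih]

theorem aux_main (C : CartanCalculus) (ω : C.carrier) (hcl : C.d ω = 0) :
    ∀ (m : ℕ) (x : Fin m → C.X), (∀ i, C.L (x i) ω = 0) →
    (∑ i : Fin m, ∑ j : Fin m, if (i : ℕ) < (j : ℕ) then
      ((-1 : ℝ) ^ ((i : ℕ) + (j : ℕ))) •
        C.iotaL (⁅x i, x j⁆ :: (((List.ofFn x).eraseIdx (j : ℕ)).eraseIdx (i : ℕ))) ω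
      else 0) = ((-1 : ℝ) ^ m) • C.d (C.iotaL (List.ofFn x) ω) := by
  intro m
  induction m with
  | zero => intro x _; simp [CartanCalculus.iotaL, hcl]
  | succ m ih =>
    intro x hx
    have h1 := ih (fun i => x i.castSucc) (fun i => hx _)
    have h2 := aux_lie C (x (Fin.last m)) m (fun i => x i.castSucc) ω
    rw [hx, map_zero, zero_add] at h2
    have hof : List.ofFn x = List.ofFn (fun i : Fin m => x i.castSucc) ++ [x (Fin.last m)] := by
      rw [List.ofFn_succ']; simp
    generalize hl : List.ofFn (fun i : Fin m => x i.castSucc) = l at *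
    have hlen : l.length = m := by rw [← hl]; simp
    rw [hof, aux_snoc, Fin.sum_univ_castSucc]
    have hlast : (∑ j : Fin (m+1), if ((Fin.last m : Fin (m+1)) : ℕ) < (j : ℕ) then
      ((-1 : ℝ) ^ (((Fin.last m : Fin (m+1)) : ℕ) + (j : ℕ))) •
        C.iotaL (⁅x (Fin.last m), x j⁆ :: (((l ++ [x (Fin.last m)]).eraseIdx (j : ℕ)).eraseIdx
          ((Fin.last m : Fin (m+1)) : ℕ))) ω
      else 0) = 0 := by
      refine Finset.sum_eq_zero fun j _ => if_neg ?_
      have := j.2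
      simp only [Fin.val_last]; omega
    rw [hlast, add_zero]
    simp only [Fin.sum_univ_castSucc, Fin.val_castSucc, Fin.val_last, Fin.is_lt, if_true]
    rw [Finset.sum_add_distrib]
    have e1 : (∑ i : Fin m, ∑ j : Fin m, if (i : ℕ) < (j : ℕ) then
      ((-1 : ℝ) ^ ((i : ℕ) + (j : ℕ))) •
        C.iotaL (⁅x i.castSucc, x j.castSucc⁆ ::
          (((l ++ [x (Fin.last m)]).eraseIdx (j : ℕ)).eraseIdx (i : ℕ))) ω
      else 0) = C.ι (x (Fin.last m)) (((-1 : ℝ) ^ m) • C.d (C.iotaL l ω)) := by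
      rw [← h1]
      simp only [map_sum]
      refine Finset.sum_congr rfl fun i _ => Finset.sum_congr rfl fun j _ => ?_
      split_ifs with hij
      · have hj := j.2
        rw [List.eraseIdx_append_of_lt_length (by omega),
          List.eraseIdx_append_of_lt_length (by rw [List.length_eraseIdx]; split_ifs <;> omega),
          ← List.cons_append, aux_snoc, map_smul]
      · simp
    have e2 : (∑ i : Fin m, ((-1 : ℝ) ^ ((i : ℕ) + m)) •
        C.iotaL (⁅x i.castSucc, x (Fin.last m)⁆ ::
          (((l ++ [x (Fin.last m)]).eraseIdx m).eraseIdx (i : ℕ))) ω)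
        = (-(-1 : ℝ) ^ m) • C.L (x (Fin.last m)) (C.iotaL l ω) := by
      rw [h2, Finset.smul_sum]
      refine Finset.sum_congr rfl fun i _ => ?_
      have : (l ++ [x (Fin.last m)]).eraseIdx m = l := by
        rw [List.eraseIdx_append_of_length_le (by omega)]; simp [hlen]
      rw [this, ← lie_skew]
      simp only [CartanCalculus.iotaL, LinearMap.comp_apply, map_neg, LinearMap.neg_apply,
        smul_smul, smul_neg, neg_mul, neg_smul]
      rw [pow_add, mul_comm]
    rw [e1, e2, map_smul, pow_succ]
    simp only [CartanCalculus.L, LinearMap.add_apply, LinearMap.comp_apply]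
    module

theorem aux_list {α : Type} [Zero α] (k : ℕ) (l : List α) (h : l.length = k) :
    List.ofFn (listToFun k l) = l := by
  subst h
  apply List.ext_getElem
  · simp
  · intro i h1 h2
    simp [listToFun, List.getElem?_eq_getElem h2]

theorem aux_eraseIdx_map {α β : Type} (f : α → β) : ∀ (l : List α) (i : ℕ),
    (l.eraseIdx i).map f = (l.map f).eraseIdx i := by
  intro l
  induction l with
  | nil => intro i; simp
  | cons a l ih => intro i; cases i <;> simp [ih]

theorem aux_dCE (C : CartanCalculus) {𝔤 : Type} [LieRing 𝔤] [LieAlgebra ℝ 𝔤]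
    (ρ : 𝔤 →ₗ⁅ℝ⁆ C.X) (ω : C.carrier) (hcl : C.d ω = 0)
    (hinv : ∀ x : 𝔤, C.L (ρ x) ω = 0) (k : ℕ) (x : Fin (k + 1) → 𝔤) :
    dCE k (C.lower ρ k ω) x = ((-1 : ℝ) ^ (k + 1)) • C.d (C.lower ρ (k + 1) ω x) := by
  have h := aux_main C ω hcl (k + 1) (fun i => ρ (x i)) (fun i => hinv _)
  unfold CartanCalculus.lower
  rw [← h]
  unfold dCE
  refine Finset.sum_congr rfl fun i _ => Finset.sum_congr rfl fun j _ => ?_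
  split_ifs with hij
  · have hj := j.2
    congr 2
    have e : ∀ y : Fin k → 𝔤, List.ofFn (fun i => ρ (y i)) = (List.ofFn y).map ρ := by
      intro y; simp [List.map_ofFn, Function.comp_def]
    have e' : List.ofFn (fun i => ρ (x i)) = (List.ofFn x).map ρ := by
      simp [List.map_ofFn, Function.comp_def]
    beta_reduce
    rw [e, e', aux_list]
    · rw [List.map_cons, aux_eraseIdx_map, aux_eraseIdx_map, LieHom.map_lie]
    · simp only [List.length_cons, List.length_eraseIdx, List.length_ofFn]
      split_ifs <;> omega
  · rfl

theorem aux_deg (C : CartanCalculus) : ∀ (l : List C.X) (i : ℤ) (a : C.carrier), a ∈ C.deg i →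
    C.iotaL l a ∈ C.deg (i - l.length) := by
  intro l
  induction l with
  | nil => intro i a h; simpa [CartanCalculus.iotaL] using h
  | cons v l ih =>
    intro i a h
    have := ih (i - 1) _ (C.ι_deg v i a h)
    have e : i - ((v :: l).length : ℤ) = i - 1 - l.length := by push_cast [List.length_cons]; ring
    rw [e]
    exact this

/-- `ω̃` is `d_tot`-closed, Corollary 2.4 of the paper.
For an invariant closed `ω ∈ Ω^{n+1}`: `d(ω₁ x) = 0` for all `x ∈ 𝔤`;
`(d_𝔤 ω_k)(x) = (-1)^{k+1} d(ω_{k+1}(x))` for `1 ≤ k ≤ n` (i.e. degrees `2 ≤ k+1 ≤ n+1`);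
and `d_𝔤 ω_{n+1} = 0`. Equivalently `d_tot ω̃ = 0`. -/
theorem omega_tilde_closed (C : CartanCalculus) {𝔤 : Type} [LieRing 𝔤] [LieAlgebra ℝ 𝔤]
    (ρ : 𝔤 →ₗ⁅ℝ⁆ C.X) (n : ℕ) (hn : 1 ≤ n) (ω : C.carrier)
    (hω : ω ∈ C.deg ((n : ℤ) + 1)) (hcl : C.d ω = 0)
    (hinv : ∀ x : 𝔤, C.L (ρ x) ω = 0) :
    (∀ x : 𝔤, C.d (C.ι (ρ x) ω) = 0) ∧
    (∀ k : ℕ, 1 ≤ k → k ≤ n → ∀ x : Fin (k + 1) → 𝔤,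
      dCE k (C.lower ρ k ω) x = ((-1 : ℝ) ^ (k + 1)) • C.d (C.lower ρ (k + 1) ω x)) ∧
    (∀ x : Fin (n + 2) → 𝔤, dCE (n + 1) (C.lower ρ (n + 1) ω) x = 0) := by
  refine ⟨fun x => ?_, fun k _ _ x => aux_dCE C ρ ω hcl hinv k x, fun x => ?_⟩
  · have := hinv x
    simpa [CartanCalculus.L, hcl] using this
  · rw [aux_dCE C ρ ω hcl hinv]
    have h := aux_deg C (List.ofFn (fun i => ρ (x i))) _ ω hω
    rw [C.deg_neg _ (by simp), Submodule.mem_bot] at h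
    unfold CartanCalculus.lower
    rw [h]
    simp
end

section
/- (Moment maps are primitives of ω̃) Let φ_k : 𝔤^k → Ω^{n−k} (k = 1,…,n) be alternating multilinear maps. The following are equivalent: (i) d(φ_1(x)) = −ι_{v_x}ω for all x ∈ 𝔤, d_𝔤φ_{k−1} + (−1)^k·dφ_k = (−1)^{k−1}·ω_k for all 2 ≤ k ≤ n, and d_𝔤φ_n = (−1)^n·ω_{n+1} (that is, d_tot(φ_1+⋯+φ_n) = ω̃ where ω̃ := Σ_{k=1}^{n+1}(−1)^{k−1}ω_k); (ii) the maps f_k := ς(k)·φ_k (k = 1,…,n) form a homotopy moment map for ω. -/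
theorem varsigma_succ_aux (k : ℕ) : varsigma (k + 1) = (-1 : ℝ) ^ (k + 1) * varsigma k := by
  unfold varsigma
  have h : (k + 1) * (k + 1 + 1) / 2 = k * (k + 1) / 2 + (k + 1) := by
    rw [show (k + 1) * (k + 1 + 1) = k * (k + 1) + (k + 1) * 2 by ring,
      Nat.add_mul_div_right _ _ (by norm_num)]
  rw [h, pow_add]
  ring

theorem varsigma_ne_aux (k : ℕ) : varsigma k ≠ 0 := by
  unfold varsigma
  exact neg_ne_zero.mpr (pow_ne_zero _ (by norm_num))

theorem momentSum_aux {𝔤 : Type} [LieRing 𝔤] [LieAlgebra ℝ 𝔤] {W : Type} [AddCommGroup W]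
    [Module ℝ W] (k : ℕ) (ψ : (Fin k → 𝔤) → W) (c : ℝ) (x : Fin (k + 1) → 𝔤) :
    (∑ i : Fin (k + 1), ∑ j : Fin (k + 1),
        if (i : ℕ) < (j : ℕ) then
          ((-1 : ℝ) ^ ((i : ℕ) + (j : ℕ) + 1)) •
            (c • ψ (listToFun k
              (⁅x i, x j⁆ :: (((List.ofFn x).eraseIdx (j : ℕ)).eraseIdx (i : ℕ)))))
        else 0) = (-c) • dCE k ψ x := by
  unfold dCE
  rw [Finset.smul_sum]
  refine Finset.sum_congr rfl fun i _ => ?_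
  rw [Finset.smul_sum]
  refine Finset.sum_congr rfl fun j _ => ?_
  split_ifs
  · rw [smul_smul, smul_smul]
    congr 1
    ring
  · simp

theorem sign_iff_aux {W : Type} [AddCommGroup W] [Module ℝ W] (k : ℕ) (D a b : W) :
    D + ((-1 : ℝ) ^ (k + 1)) • a = ((-1 : ℝ) ^ k) • b ↔
      (-varsigma k) • D = varsigma (k + 1) • a + varsigma (k + 1) • b := by
  have hne : -varsigma k ≠ 0 := neg_ne_zero.mpr (varsigma_ne_aux k)
  have h : varsigma (k + 1) • a + varsigma (k + 1) • b
      = (-varsigma k) • (((-1 : ℝ) ^ k) • a + ((-1 : ℝ) ^ k) • b) := by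
    rw [varsigma_succ_aux, pow_succ]
    module
  rw [h, (smul_right_injective W hne).eq_iff, pow_succ]
  constructor
  · intro e
    rw [← e]
    module
  · intro e
    rw [e]
    module

/-- moment maps are primitives of `ω̃`, Prop. 2.5 of the paper.
Alternating multilinear maps `φ_k : 𝔤^k → Ω^{n-k}` (`k = 1,…,n`) satisfy
`d_tot(φ₁ + ⋯ + φ_n) = ω̃` — componentwise: `d(φ₁ x) = -ι_{v_x}ω`,
`d_𝔤 φ_k + (-1)^{k+1} dφ_{k+1} = (-1)^k ω_{k+1}` for `1 ≤ k`, `k+1 ≤ n`, and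
`d_𝔤 φ_n = (-1)^n ω_{n+1}` — if and only if `f_k := ς(k)·φ_k` is a homotopy
moment map for `ω`. -/
theorem momentMap_iff_primitive (C : CartanCalculus) {𝔤 : Type} [LieRing 𝔤]
    [LieAlgebra ℝ 𝔤] (ρ : 𝔤 →ₗ⁅ℝ⁆ C.X) (n : ℕ) (hn : 1 ≤ n) (ω : C.carrier)
    (hω : ω ∈ C.deg ((n : ℤ) + 1)) (hcl : C.d ω = 0)
    (hinv : ∀ x : 𝔤, C.L (ρ x) ω = 0)
    (φ : (k : ℕ) → (Fin k → 𝔤) → C.carrier)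
    (hmult : ∀ k : ℕ, 1 ≤ k → k ≤ n → IsMultilinear (φ k))
    (halt : ∀ k : ℕ, 1 ≤ k → k ≤ n → IsAlternating (φ k))
    (hdeg : ∀ k : ℕ, 1 ≤ k → k ≤ n → ∀ x, φ k x ∈ C.deg ((n : ℤ) - (k : ℤ))) :
    ((∀ x : 𝔤, C.d (φ 1 (fun _ => x)) = - C.ι (ρ x) ω) ∧
     (∀ k : ℕ, 1 ≤ k → k + 1 ≤ n → ∀ x : Fin (k + 1) → 𝔤,
        dCE k (φ k) x + ((-1 : ℝ) ^ (k + 1)) • C.d (φ (k + 1) x)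
          = ((-1 : ℝ) ^ k) • C.lower ρ (k + 1) ω x) ∧
     (∀ x : Fin (n + 1) → 𝔤,
        dCE n (φ n) x = ((-1 : ℝ) ^ n) • C.lower ρ (n + 1) ω x))
    ↔ IsMomentMap C ρ n ω (fun k x => varsigma k • φ k x) := by
  have h1 : varsigma 1 = 1 := by norm_num [varsigma]
  constructor
  · rintro ⟨ha, hb, hc⟩
    refine ⟨fun k hk hkn => ⟨?_, ?_, ?_⟩, ?_, ?_, ?_⟩
    · intro x i
      obtain ⟨p, q⟩ := hmult k hk hkn x i
      refine ⟨fun a b => ?_, fun c a => ?_⟩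
      · simp only [p, smul_add]
      · simp only [q]
        exact smul_comm _ _ _
    · intro x i j hij hx
      simp only [halt k hk hkn x i j hij hx, smul_zero]
    · intro x
      exact Submodule.smul_mem _ _ (hdeg k hk hkn x)
    · intro x
      simp only [h1, one_smul]
      exact ha x
    · intro k hk hkn x
      obtain ⟨m, rfl⟩ : ∃ m, k = m + 1 := ⟨k - 1, by omega⟩
      refine (momentSum_aux m (φ m) (varsigma m) x).trans ?_
      simp only [map_smul]
      exact (sign_iff_aux m _ _ _).1 (hb m (by omega) hkn x)
    · intro x
      refine (momentSum_aux n (φ n) (varsigma n) x).trans ?_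
      have := (sign_iff_aux n (dCE n (φ n) x) 0 (C.lower ρ (n + 1) ω x)).1
        (by simpa using hc x)
      simpa using this
  · rintro ⟨-, ha, hb, hc⟩
    refine ⟨?_, ?_, ?_⟩
    · intro x
      have := ha x
      simp only [h1, one_smul] at this
      exact this
    · intro k hk hkn x
      have := (momentSum_aux k (φ k) (varsigma k) x).symm.trans (hb (k + 1) (by omega) hkn x)
      simp only [map_smul] at this
      exact (sign_iff_aux k _ _ _).2 this
    · intro x
      have := (momentSum_aux n (φ n) (varsigma n) x).symm.trans (hc x)
      have := (sign_iff_aux n (dCE n (φ n) x) 0 (C.lower ρ (n + 1) ω x)).2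
        (by simpa using this)
      simpa using this
end

section
/- (Cocycles of the cone complex) Let φ_k : 𝔤^k → Ω^{n−k} (k = 1,…,n) be alternating multilinear maps. Then the pair (ω, φ) is a cocycle for the cone differential D(ω,φ) := (dω, ω̃ − d_tot φ) — explicitly: dω = 0, d(φ_1(x)) = −ι_{v_x}ω for all x ∈ 𝔤, d_𝔤φ_{k−1} + (−1)^k·dφ_k = (−1)^{k−1}·ω_k for all 2 ≤ k ≤ n, and d_𝔤φ_n = (−1)^n·ω_{n+1} — if and only if dω = 0 and the maps f_k := ς(k)·φ_k (k = 1,…,n) form a homotopy moment map for ω. -/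
theorem varsigma_sq_aux (k : ℕ) : varsigma k * varsigma k = 1 := by
  unfold varsigma
  rw [neg_mul_neg, ← mul_pow]
  norm_num

theorem varsigma_one_aux : varsigma 1 = 1 := by
  norm_num [varsigma]

theorem sum_eq_aux {𝔤 : Type} [LieRing 𝔤] [LieAlgebra ℝ 𝔤] {W : Type} [AddCommGroup W]
    [Module ℝ W] (k : ℕ) (c : ℝ) (ψ : (Fin k → 𝔤) → W) (x : Fin (k + 1) → 𝔤) :
    (∑ i : Fin (k + 1), ∑ j : Fin (k + 1),
      if (i : ℕ) < (j : ℕ) then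
        ((-1 : ℝ) ^ ((i : ℕ) + (j : ℕ) + 1)) •
          (c • ψ (listToFun k
            (⁅x i, x j⁆ :: (((List.ofFn x).eraseIdx (j : ℕ)).eraseIdx (i : ℕ)))))
      else 0) = (-c) • dCE k ψ x := by
  unfold dCE
  rw [Finset.smul_sum]
  refine Finset.sum_congr rfl fun i _ => ?_
  rw [Finset.smul_sum]
  refine Finset.sum_congr rfl fun j _ => ?_
  split_ifs
  · rw [smul_smul, smul_smul]
    congr 1
    ring
  · simp

/-- Sign bookkeeping: both forms of the structure equation are equivalent. -/
theorem eqn_aux {W : Type} [AddCommGroup W] [Module ℝ W] (k : ℕ) (A B E : W) :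
    A + ((-1 : ℝ) ^ (k + 1)) • B = ((-1 : ℝ) ^ k) • E ↔
      (-varsigma k) • A = varsigma (k + 1) • B + varsigma (k + 1) • E := by
  have hs := varsigma_sq_aux k
  rw [varsigma_succ_aux]
  constructor
  · intro h
    have hA : A = ((-1 : ℝ) ^ k) • E - ((-1 : ℝ) ^ (k + 1)) • B := eq_sub_of_add_eq h
    rw [hA]
    module
  · intro h
    have h2 : A = (-varsigma k) • ((-varsigma k) • A) := by
      rw [smul_smul, neg_mul_neg, hs, one_smul]
    rw [h] at h2
    have h3 : (-varsigma k) • (((-1 : ℝ) ^ (k + 1) * varsigma k) • B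
        + ((-1 : ℝ) ^ (k + 1) * varsigma k) • E)
        = (varsigma k * varsigma k) • (((-1 : ℝ) ^ k) • E - ((-1 : ℝ) ^ (k + 1)) • B) := by
      module
    rw [h3, hs, one_smul] at h2
    rw [h2]
    abel

/-- cocycles of the cone complex, Prop. 3.1 of the paper.
For alternating multilinear maps `φ_k : 𝔤^k → Ω^{n-k}` (`k = 1,…,n`), the pair
`(ω, φ)` is a cocycle for the cone differential `D(ω,φ) = (dω, ω̃ - d_tot φ)` —
explicitly `dω = 0`, `d(φ₁ x) = -ι_{v_x}ω`,
`d_𝔤 φ_k + (-1)^{k+1} dφ_{k+1} = (-1)^k ω_{k+1}` for `1 ≤ k`, `k+1 ≤ n`, and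
`d_𝔤 φ_n = (-1)^n ω_{n+1}` — iff `dω = 0` and `f_k := ς(k)·φ_k` is a homotopy
moment map for `ω`. (Closedness of `ω` is not assumed.) -/
theorem cone_cocycle_iff_momentMap (C : CartanCalculus) {𝔤 : Type} [LieRing 𝔤]
    [LieAlgebra ℝ 𝔤] (ρ : 𝔤 →ₗ⁅ℝ⁆ C.X) (n : ℕ) (hn : 1 ≤ n) (ω : C.carrier)
    (hω : ω ∈ C.deg ((n : ℤ) + 1))
    (hinv : ∀ x : 𝔤, C.L (ρ x) ω = 0)
    (φ : (k : ℕ) → (Fin k → 𝔤) → C.carrier)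
    (hmult : ∀ k : ℕ, 1 ≤ k → k ≤ n → IsMultilinear (φ k))
    (halt : ∀ k : ℕ, 1 ≤ k → k ≤ n → IsAlternating (φ k))
    (hdeg : ∀ k : ℕ, 1 ≤ k → k ≤ n → ∀ x, φ k x ∈ C.deg ((n : ℤ) - (k : ℤ))) :
    (C.d ω = 0 ∧
     (∀ x : 𝔤, C.d (φ 1 (fun _ => x)) = - C.ι (ρ x) ω) ∧
     (∀ k : ℕ, 1 ≤ k → k + 1 ≤ n → ∀ x : Fin (k + 1) → 𝔤,
        dCE k (φ k) x + ((-1 : ℝ) ^ (k + 1)) • C.d (φ (k + 1) x)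
          = ((-1 : ℝ) ^ k) • C.lower ρ (k + 1) ω x) ∧
     (∀ x : Fin (n + 1) → 𝔤,
        dCE n (φ n) x = ((-1 : ℝ) ^ n) • C.lower ρ (n + 1) ω x))
    ↔ (C.d ω = 0 ∧ IsMomentMap C ρ n ω (fun k x => varsigma k • φ k x)) := by
  unfold IsMomentMap
  refine and_congr_right fun _ => ?_
  have h0 : ∀ k : ℕ, 1 ≤ k → k ≤ n →
      IsMultilinear (fun x => varsigma k • φ k x) ∧ IsAlternating (fun x => varsigma k • φ k x) ∧
        ∀ x, varsigma k • φ k x ∈ C.deg ((n : ℤ) - (k : ℤ)) := by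
    intro k h1 h2
    refine ⟨fun x i => ⟨fun a b => ?_, fun c a => ?_⟩, fun x i j hij hx => ?_, fun x => ?_⟩
    · simp only [(hmult k h1 h2 x i).1 a b, smul_add]
    · simp only [(hmult k h1 h2 x i).2 c a]
      rw [smul_comm]
    · simp only [halt k h1 h2 x i j hij hx, smul_zero]
    · exact (C.deg _).smul_mem _ (hdeg k h1 h2 x)
  constructor
  · rintro ⟨a, b, c⟩
    refine ⟨h0, fun x => ?_, ?_, fun x => ?_⟩
    · simp only [varsigma_one_aux, one_smul]
      exact a x
    · intro k h1 h2 x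
      obtain ⟨m, rfl⟩ : ∃ m, k = m + 1 := ⟨k - 1, by omega⟩
      refine (sum_eq_aux m (varsigma m) (φ m) x).trans ?_
      rw [map_smul]
      exact (eqn_aux m _ _ _).1 (b m (by omega) h2 x)
    · refine (sum_eq_aux n (varsigma n) (φ n) x).trans ?_
      have := (eqn_aux n (dCE n (φ n) x) 0 (C.lower ρ (n + 1) ω x)).1 (by simpa using c x)
      simpa using this
  · rintro ⟨-, a, b, c⟩
    refine ⟨fun x => ?_, fun m h1 h2 x => ?_, fun x => ?_⟩
    · simpa only [varsigma_one_aux, one_smul] using a x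
    · have h := (sum_eq_aux m (varsigma m) (φ m) x).symm.trans (b (m + 1) (by omega) h2 x)
      rw [map_smul] at h
      exact (eqn_aux m _ _ _).2 h
    · have h := (sum_eq_aux n (varsigma n) (φ n) x).symm.trans (c x)
      have := (eqn_aux n (dCE n (φ n) x) 0 (C.lower ρ (n + 1) ω x)).2 (by simpa using h)
      simpa using this
end

section
/- Let N ≥ 0 and let F : 𝔤 → Ω^N be linear and equivariant with ι_{v_x}(F(x)) = 0 for all x ∈ 𝔤. Then: (1) each multilinear map F_k is alternating; (2) the map dF : x ↦ d(F(x)) is linear and equivariant and satisfies ι_{v_x}(d(F(x))) = 0 for all x ∈ 𝔤; (3) for every k ≥ 2 and all x_1,…,x_k ∈ 𝔤, (−1)^{k−1}·d(F_k(x_1,…,x_k)) = (d_𝔤F_{k−1})(x_1,…,x_k) + (dF)_k(x_1,…,x_k), where (dF)_k(x_1,…,x_k) := ι(v_{x_1}∧⋯∧v_{x_{k−1}})(d(F(x_k))). Equivalently, F̃ := F_1 + F_2 + ⋯ satisfies d_tot F̃ = −(dF)~, where d_tot acts on a family (ψ_k) of multilinear maps 𝔤^k → Ω by d_𝔤ψ_k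 + (−1)^k dψ_k. -/
namespace CartanCalculus

/-- list version of `lowerF`, built by prepending contractions -/
def GG (C : CartanCalculus) {𝔤 : Type} [LieRing 𝔤] [LieAlgebra ℝ 𝔤]
    (ρ : 𝔤 →ₗ⁅ℝ⁆ C.X) (F : 𝔤 → C.carrier) : List 𝔤 → C.carrier
  | [] => 0
  | [x] => F x
  | x :: y :: l => ((-1 : ℝ) ^ l.length) • C.ι (ρ x) (GG C ρ F (y :: l))

theorem sgn_sq {M : Type} [AddCommGroup M] [Module ℝ M] (n : ℕ) (a : M) :
    ((-1 : ℝ) ^ n) • ((-1 : ℝ) ^ n) • a = a := by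
  rw [smul_smul, ← mul_pow]; simp

theorem iotaL_comm (C : CartanCalculus) (vs : List C.X) (v : C.X) (a : C.carrier) :
    C.iotaL vs (C.ι v a) = ((-1 : ℝ) ^ vs.length) • C.ι v (C.iotaL vs a) := by
  induction vs generalizing a with
  | nil => simp [iotaL]
  | cons w vs ih =>
    simp only [iotaL, LinearMap.comp_apply, List.length_cons]
    rw [C.ι_ι w v, map_neg, ih, pow_succ]
    simp

theorem len_erase2 {α : Type} (l : List α) (i j : ℕ) (hij : i < j) (hj : j < l.length) :
    ((l.eraseIdx j).eraseIdx i).length = l.length - 2 := by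
  simp only [List.length_eraseIdx]
  split_ifs <;> omega

variable {𝔤 : Type} [LieRing 𝔤] [LieAlgebra ℝ 𝔤]

theorem GG_cons (C : CartanCalculus) (ρ : 𝔤 →ₗ⁅ℝ⁆ C.X) (F : 𝔤 → C.carrier)
    (x : 𝔤) (l : List 𝔤) (n : ℕ) (hl : l.length = n + 1) :
    GG C ρ F (x :: l) = ((-1 : ℝ) ^ n) • C.ι (ρ x) (GG C ρ F l) := by
  cases l with
  | nil => simp at hl
  | cons y l =>
    simp at hl
    simp [GG, hl]

theorem lowerF_eq (C : CartanCalculus) (ρ : 𝔤 →ₗ⁅ℝ⁆ C.X) (F : 𝔤 → C.carrier) (k : ℕ)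
    (x : Fin k → 𝔤) : C.lowerF ρ F k x = GG C ρ F (List.ofFn x) := by
  induction k with
  | zero => simp [lowerF, GG]
  | succ k ih =>
    cases k with
    | zero => simp [lowerF, GG, iotaL]
    | succ k =>
      rw [List.ofFn_succ, GG_cons C ρ F _ _ k (by simp), ← ih]
      simp only [lowerF]
      rw [List.ofFn_succ]
      simp only [iotaL, LinearMap.comp_apply]
      rw [iotaL_comm]
      simp

theorem ofFn_listToFun (k : ℕ) (l : List 𝔤) (hl : l.length = k) :
    List.ofFn (listToFun k l) = l := by
  subst hl
  apply List.ext_getElem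
  · simp
  · intro i h1 h2
    simp [listToFun, h2]

theorem GG_swap (C : CartanCalculus) (ρ : 𝔤 →ₗ⁅ℝ⁆ C.X) (F : 𝔤 →ₗ[ℝ] C.carrier)
    (hvan : ∀ x : 𝔤, C.ι (ρ x) (F x) = 0) (x y : 𝔤) (l : List 𝔤) :
    GG C ρ F (x :: y :: l) = - GG C ρ F (y :: x :: l) := by
  cases l with
  | nil =>
    have h := hvan (x + y)
    simp only [map_add, LinearMap.add_apply, hvan] at h
    simp only [GG, List.length_nil, pow_zero, one_smul]
    rw [eq_neg_iff_add_eq_zero]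
    simpa [add_comm] using h
  | cons z l =>
    simp only [GG, map_smul, List.length_cons]
    rw [C.ι_ι]
    simp

theorem GG_mem (C : CartanCalculus) (ρ : 𝔤 →ₗ⁅ℝ⁆ C.X) (F : 𝔤 →ₗ[ℝ] C.carrier)
    (hvan : ∀ x : 𝔤, C.ι (ρ x) (F x) = 0) (x : 𝔤) (l : List 𝔤) (h : x ∈ l) :
    GG C ρ F (x :: l) = 0 := by
  induction l with
  | nil => simp at h
  | cons y l ih =>
    by_cases hxy : x = y
    · subst hxy
      have := GG_swap C ρ F hvan x x l
      have h2 : (2 : ℝ) • GG C ρ F (x :: x :: l) = 0 := by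
        rw [two_smul]; nth_rewrite 1 [this]; simp
      simpa using h2
    · have hm : x ∈ l := by simpa [hxy] using h
      rw [GG_swap C ρ F hvan, GG_cons C ρ F y (x :: l) l.length (by simp), ih hm]
      simp

theorem GG_nodup (C : CartanCalculus) (ρ : 𝔤 →ₗ⁅ℝ⁆ C.X) (F : 𝔤 →ₗ[ℝ] C.carrier)
    (hvan : ∀ x : 𝔤, C.ι (ρ x) (F x) = 0) (l : List 𝔤) (h : ¬ l.Nodup) :
    GG C ρ F l = 0 := by
  induction l with
  | nil => simp [GG]
  | cons y l ih =>
    by_cases hm : y ∈ l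
    · exact GG_mem C ρ F hvan y l hm
    · have hn : ¬ l.Nodup := by
        intro hn; exact h (List.nodup_cons.2 ⟨hm, hn⟩)
      cases l with
      | nil => simp at hn
      | cons z l => simp [GG, ih hn]

theorem L_GG (C : CartanCalculus) (ρ : 𝔤 →ₗ⁅ℝ⁆ C.X) (F : 𝔤 →ₗ[ℝ] C.carrier)
    (hequiv : ∀ x y : 𝔤, C.L (ρ x) (F y) = F ⁅x, y⁆)
    (hvan : ∀ x : 𝔤, C.ι (ρ x) (F x) = 0) (x : 𝔤) (k : ℕ) (y : Fin k → 𝔤) :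
    C.L (ρ x) (GG C ρ F (List.ofFn y)) =
      ∑ j : Fin k, ((-1 : ℝ) ^ (j : ℕ)) •
        GG C ρ F (⁅x, y j⁆ :: (List.ofFn y).eraseIdx (j : ℕ)) := by
  induction k with
  | zero => simp [GG]
  | succ k ih =>
    cases k with
    | zero => simp [GG, hequiv]
    | succ k =>
      rw [Fin.sum_univ_succ, List.ofFn_succ, GG_cons C ρ F _ _ k (by simp), map_smul]
      have hc := C.cartan (ρ x) (ρ (y 0)) (GG C ρ F (List.ofFn fun i => y (Fin.succ i)))
      have hc' : C.L (ρ x) (C.ι (ρ (y 0)) (GG C ρ F (List.ofFn fun i => y (Fin.succ i))))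
          = C.ι (ρ ⁅x, y 0⁆) (GG C ρ F (List.ofFn fun i => y (Fin.succ i)))
          + C.ι (ρ (y 0)) (C.L (ρ x) (GG C ρ F (List.ofFn fun i => y (Fin.succ i)))) := by
        rw [LieHom.map_lie, ← hc]; simp [L]
      rw [hc', ih, smul_add]
      congr 1
      · simp only [Fin.val_zero, List.eraseIdx_zero, List.tail_cons, pow_zero, one_smul]
        rw [GG_cons C ρ F _ _ k (by simp)]
      · rw [map_sum, Finset.smul_sum]
        apply Finset.sum_congr rfl
        intro j _
        simp only [Fin.val_succ, List.eraseIdx_cons_succ]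
        have hlen : ((List.ofFn fun i => y (Fin.succ i)).eraseIdx (j : ℕ)).length = k := by
          rw [List.length_eraseIdx_of_lt (by simpa using j.isLt)]; simp
        rw [GG_swap C ρ F hvan, GG_cons C ρ F (y 0) _ k (by simpa using hlen), map_smul,
          pow_succ, smul_comm]
        simp

theorem main_GG (C : CartanCalculus) (ρ : 𝔤 →ₗ⁅ℝ⁆ C.X) (F : 𝔤 →ₗ[ℝ] C.carrier)
    (hequiv : ∀ x y : 𝔤, C.L (ρ x) (F y) = F ⁅x, y⁆)
    (hvan : ∀ x : 𝔤, C.ι (ρ x) (F x) = 0) (k : ℕ) (x : Fin (k + 1) → 𝔤) :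
    ((-1 : ℝ) ^ k) • C.d (GG C ρ F (List.ofFn x)) =
      (∑ i : Fin (k + 1), ∑ j : Fin (k + 1),
        if (i : ℕ) < (j : ℕ) then
          ((-1 : ℝ) ^ ((i : ℕ) + (j : ℕ))) •
            GG C ρ F (⁅x i, x j⁆ :: (((List.ofFn x).eraseIdx (j : ℕ)).eraseIdx (i : ℕ)))
        else 0) + GG C ρ (fun y => C.d (F y)) (List.ofFn x) := by
  induction k with
  | zero => simp [GG]
  | succ k ih =>
    have ih' := ih (fun i => x i.succ)
    rw [List.ofFn_succ, GG_cons C ρ F _ _ k (by simp), GG_cons C ρ _ _ _ k (by simp)]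
    set T := List.ofFn fun i => x (Fin.succ i) with hT
    have hTl : T.length = k + 1 := by simp [hT]
    have hLx := L_GG C ρ F hequiv hvan (x 0) (k + 1) (fun i => x i.succ)
    rw [← hT] at hLx
    have h1 : C.d (C.ι (ρ (x 0)) (GG C ρ F T)) =
        C.L (ρ (x 0)) (GG C ρ F T) - C.ι (ρ (x 0)) (C.d (GG C ρ F T)) := by
      simp [L]
    have h2 : C.ι (ρ (x 0)) (C.d (GG C ρ F T)) = ((-1 : ℝ) ^ k) • C.ι (ρ (x 0))
        (((-1 : ℝ) ^ k) • C.d (GG C ρ F T)) := by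
      rw [map_smul, sgn_sq]
    rw [map_smul, pow_succ, mul_comm, mul_smul, sgn_sq, h1, h2, ih', hLx,
      Fin.sum_univ_succ (n := k + 1), Fin.sum_univ_succ (n := k + 1)]
    simp only [map_add, smul_add, neg_smul, one_smul, neg_sub, Fin.val_zero, lt_irrefl, if_false,
      zero_add, Fin.val_succ, Nat.succ_pos, if_true, List.eraseIdx_cons_succ, List.eraseIdx_zero,
      List.tail_cons]
    rw [add_sub_right_comm]
    congr 1
    rw [sub_eq_neg_add]
    congr 1
    · rw [← Finset.sum_neg_distrib]
      apply Finset.sum_congr rfl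
      intro j _
      simp [pow_succ]
    · rw [map_sum, Finset.smul_sum]
      apply Finset.sum_congr rfl
      intro i _
      rw [Fin.sum_univ_succ (n := k + 1), map_sum, Finset.smul_sum]
      simp only [Fin.val_zero, Nat.not_lt_zero, if_false, zero_add, Fin.val_succ,
        add_lt_add_iff_right]
      apply Finset.sum_congr rfl
      intro j _
      split_ifs with hij
      · have hj := j.isLt
        obtain ⟨m, rfl⟩ : ∃ m, k = m + 1 := ⟨k - 1, by omega⟩
        have hlen : ((T.eraseIdx (j : ℕ)).eraseIdx (i : ℕ)).length = m := by
          rw [len_erase2 T i j hij (by omega)]; omega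
        simp only [List.eraseIdx_cons_succ]
        rw [GG_swap C ρ F hvan, GG_cons C ρ F (x 0) _ m (by simpa using hlen), map_smul]
        have e : (i : ℕ) + 1 + ((j : ℕ) + 1) = (i : ℕ) + j + 2 := by ring
        rw [e, pow_add _ _ 2, smul_comm, pow_succ _ m]
        simp
      · simp

end CartanCalculus

/-- Lemma 4.1 of the paper. For `F : 𝔤 → Ω^N` linear,
equivariant, with `ι_{v_x}(F x) = 0` for all `x`: (1) each `F_k` is alternating;
(2) `dF : x ↦ d(F x)` is linear, equivariant and satisfies `ι_{v_x}(d(F x)) = 0`;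
(3) `(-1)^k d(F_{k+1}(x)) = (d_𝔤 F_k)(x) + (dF)_{k+1}(x)` for all `k ≥ 1`
(i.e. degrees `k+1 ≥ 2`); equivalently `d_tot F̃ = -(dF)~`. -/
theorem lowerF_chain_map (C : CartanCalculus) {𝔤 : Type} [LieRing 𝔤] [LieAlgebra ℝ 𝔤]
    (ρ : 𝔤 →ₗ⁅ℝ⁆ C.X) (N : ℤ) (hN : 0 ≤ N) (F : 𝔤 →ₗ[ℝ] C.carrier)
    (hdeg : ∀ x : 𝔤, F x ∈ C.deg N)
    (hequiv : ∀ x y : 𝔤, C.L (ρ x) (F y) = F ⁅x, y⁆)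
    (hvan : ∀ x : 𝔤, C.ι (ρ x) (F x) = 0) :
    (∀ k : ℕ, IsAlternating (C.lowerF ρ (fun y => F y) k)) ∧
    ((∀ x y : 𝔤, C.d (F (x + y)) = C.d (F x) + C.d (F y)) ∧
     (∀ (c : ℝ) (x : 𝔤), C.d (F (c • x)) = c • C.d (F x)) ∧
     (∀ x y : 𝔤, C.L (ρ x) (C.d (F y)) = C.d (F ⁅x, y⁆)) ∧
     (∀ x : 𝔤, C.ι (ρ x) (C.d (F x)) = 0)) ∧
    (∀ k : ℕ, 1 ≤ k → ∀ x : Fin (k + 1) → 𝔤,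
      ((-1 : ℝ) ^ k) • C.d (C.lowerF ρ (fun y => F y) (k + 1) x)
        = dCE k (C.lowerF ρ (fun y => F y) k) x
          + C.lowerF ρ (fun y => C.d (F y)) (k + 1) x) := by
  refine ⟨?_, ⟨?_, ?_, ?_, ?_⟩, ?_⟩
  · intro k x i j hij hx
    rw [CartanCalculus.lowerF_eq]
    apply CartanCalculus.GG_nodup C ρ F hvan
    rw [List.nodup_ofFn]
    intro hinj
    exact hij (hinj hx)
  · intro x y; simp
  · intro c x; simp
  · intro x y
    rw [← hequiv]
    simp [CartanCalculus.L, C.d_d]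
  · intro x
    have h := hequiv x x
    simpa [CartanCalculus.L, hvan] using h
  · intro k hk x
    rw [CartanCalculus.lowerF_eq, CartanCalculus.lowerF_eq,
      CartanCalculus.main_GG C ρ F hequiv hvan]
    congr 1
    unfold dCE
    apply Finset.sum_congr rfl
    intro i _
    apply Finset.sum_congr rfl
    intro j _
    split_ifs with hij
    · rw [CartanCalculus.lowerF_eq, CartanCalculus.ofFn_listToFun]
      have hj := j.isLt
      rw [List.length_cons, CartanCalculus.len_erase2 _ _ _ hij (by simpa using hj),
        List.length_ofFn]
      omega
    · rfl
end

section
/- (Cartan cocycles give homotopy moment maps) Let μ : 𝔤 → Ω^{n−1} be linear and equivariant with d(μ(x)) = −ι_{v_x}ω and ι_{v_x}(μ(x)) = 0 for all x ∈ 𝔤 (so that ω − μ is a cocycle in the Cartan model). Then the maps f_k : 𝔤^k → Ω^{n−k} defined by f_k(x_1,…,x_k) := ς(k)·ι(v_{x_1}∧⋯∧v_{x_{k−1}})(μ(x_k)) (k = 1,…,n) form a homotopy moment map for ω; equivalently, the maps φ_k := μ_k satisfy d(φ_1(x)) = −ι_{v_x}ω for all x ∈ 𝔤, d_𝔤φ_{k−1}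 + (−1)^k·dφ_k = (−1)^{k−1}·ω_k for all 2 ≤ k ≤ n, and d_𝔤φ_n = (−1)^n·ω_{n+1}. -/
namespace CartanAux

section sums
variable {𝔤 : Type} {W : Type} [AddCommGroup W] [Module ℝ W]

/-- Alternating sum over one removed entry. -/
def T : (𝔤 → List 𝔤 → W) → List 𝔤 → W
  | _, [] => 0
  | H, y :: l => H y l - T (fun z m => H z (y :: m)) l

theorem T_add (H K : 𝔤 → List 𝔤 → W) (l : List 𝔤) :
    T (fun z m => H z m + K z m) l = T H l + T K l := by
  induction l generalizing H K with
  | nil => simp [T]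
  | cons y l ih => simp only [T]; rw [ih]; abel

theorem T_neg (H : 𝔤 → List 𝔤 → W) (l : List 𝔤) :
    T (fun z m => - H z m) l = - T H l := by
  induction l generalizing H with
  | nil => simp [T]
  | cons y l ih => simp only [T]; rw [ih]; abel

/-- Signed sum over pairs of removed entries. -/
def S [LieRing 𝔤] : (𝔤 → List 𝔤 → W) → List 𝔤 → W
  | _, [] => 0
  | G, x :: l => - T (fun z m => G ⁅x, z⁆ m) l + S (fun w m => G w (x :: m)) l

theorem S_neg [LieRing 𝔤] (G : 𝔤 → List 𝔤 → W) (l : List 𝔤) :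
    S (fun z m => - G z m) l = - S G l := by
  induction l generalizing G with
  | nil => simp [S]
  | cons y l ih => simp only [S]; rw [ih, T_neg]; abel

theorem T_eq {k : ℕ} (H : 𝔤 → List 𝔤 → W) (x : Fin k → 𝔤) :
    ∑ j : Fin k, ((-1 : ℝ) ^ (j : ℕ)) • H (x j) ((List.ofFn x).eraseIdx j) =
      T H (List.ofFn x) := by
  induction k generalizing H with
  | zero => simp [T]
  | succ k ih =>
    rw [Fin.sum_univ_succ, List.ofFn_succ]
    simp only [T]
    rw [← ih]
    simp [pow_succ, sub_eq_add_neg]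

theorem S_eq [LieRing 𝔤] {k : ℕ} (G : 𝔤 → List 𝔤 → W) (x : Fin k → 𝔤) :
    (∑ i : Fin k, ∑ j : Fin k, if (i : ℕ) < (j : ℕ) then
      ((-1 : ℝ) ^ ((i : ℕ) + (j : ℕ))) •
        G ⁅x i, x j⁆ (((List.ofFn x).eraseIdx (j : ℕ)).eraseIdx (i : ℕ)) else 0) =
      S G (List.ofFn x) := by
  induction k generalizing G with
  | zero => simp [S]
  | succ k ih =>
    rw [Fin.sum_univ_succ, List.ofFn_succ]
    simp only [S]
    rw [← ih, ← T_eq]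
    congr 1
    · rw [Fin.sum_univ_succ]
      simp [pow_succ]
    · refine Finset.sum_congr rfl fun i _ => ?_
      rw [Fin.sum_univ_succ]
      simp only [Fin.val_succ, Fin.val_zero, not_lt_zero, if_false, zero_add,
        List.eraseIdx_cons_succ, add_lt_add_iff_right]
      refine Finset.sum_congr rfl fun j _ => ?_
      have : ((-1 : ℝ) ^ ((i : ℕ) + 1 + ((j : ℕ) + 1))) = (-1 : ℝ) ^ ((i : ℕ) + (j : ℕ)) := by
        ring
      rw [this]

end sums

variable (C : CartanCalculus) {𝔤 : Type} [LieRing 𝔤] [LieAlgebra ℝ 𝔤] (ρ : 𝔤 →ₗ⁅ℝ⁆ C.X)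

/-- contraction along a list of Lie algebra elements -/
def M (l : List 𝔤) (σ : C.carrier) : C.carrier := C.iotaL (l.map ρ) σ

theorem M_nil (σ : C.carrier) : M C ρ [] σ = σ := rfl
theorem M_cons (x : 𝔤) (l : List 𝔤) (σ : C.carrier) :
    M C ρ (x :: l) σ = M C ρ l (C.ι (ρ x) σ) := rfl
theorem M_add (l : List 𝔤) (σ τ : C.carrier) :
    M C ρ l (σ + τ) = M C ρ l σ + M C ρ l τ := map_add _ _ _
theorem M_sub (l : List 𝔤) (σ τ : C.carrier) :
    M C ρ l (σ - τ) = M C ρ l σ - M C ρ l τ := map_sub _ _ _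
theorem M_neg (l : List 𝔤) (σ : C.carrier) :
    M C ρ l (-σ) = - M C ρ l σ := map_neg _ _
theorem M_smul (l : List 𝔤) (c : ℝ) (σ : C.carrier) :
    M C ρ l (c • σ) = c • M C ρ l σ := map_smul _ _ _
theorem M_zero (l : List 𝔤) : M C ρ l 0 = 0 := map_zero _

theorem L_ι (z x : 𝔤) (σ : C.carrier) :
    C.L (ρ z) (C.ι (ρ x) σ) = C.ι (ρ x) (C.L (ρ z) σ) + - C.ι (ρ ⁅x, z⁆) σ := by
  have h := C.cartan (ρ z) (ρ x) σ
  have h2 : C.ι (ρ ⁅x, z⁆) σ = - C.ι ⁅ρ z, ρ x⁆ σ := by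
    rw [LieHom.map_lie, ← lie_skew (ρ x) (ρ z), map_neg, LinearMap.neg_apply]
  rw [h2, neg_neg, ← h]
  simp [CartanCalculus.L]

theorem d_ι (x : 𝔤) (σ : C.carrier) :
    C.d (C.ι (ρ x) σ) = C.L (ρ x) σ - C.ι (ρ x) (C.d σ) := by
  simp [CartanCalculus.L]

theorem d_M (l : List 𝔤) (σ : C.carrier) :
    ((-1 : ℝ) ^ l.length) • C.d (M C ρ l σ) = M C ρ l (C.d σ)
      - T (fun z m => M C ρ m (C.L (ρ z) σ)) l
      + S (fun w m => M C ρ m (C.ι (ρ w) σ)) l := by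
  induction l generalizing σ with
  | nil => simp [T, S, M_nil]
  | cons x l ih =>
    have h := ih (C.ι (ρ x) σ)
    simp only [M_cons, List.length_cons, pow_succ, mul_neg_one, neg_smul, T, S]
    rw [h, d_ι, M_sub]
    simp only [L_ι, M_add, M_neg]
    rw [T_add, T_neg]
    simp only [C.ι_ι _ (ρ x), M_neg]
    rw [S_neg]
    abel

theorem ι_M (y : 𝔤) (l : List 𝔤) (σ : C.carrier) :
    C.ι (ρ y) (M C ρ l σ) = ((-1 : ℝ) ^ l.length) • M C ρ l (C.ι (ρ y) σ) := by
  induction l generalizing σ with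
  | nil => simp [M_nil]
  | cons x l ih =>
    rw [M_cons, ih, M_cons, C.ι_ι, M_neg]
    simp [pow_succ]

theorem M_concat (y : 𝔤) (l : List 𝔤) (σ : C.carrier) :
    M C ρ (l ++ [y]) σ = C.ι (ρ y) (M C ρ l σ) := by
  induction l generalizing σ with
  | nil => rfl
  | cons x l ih => exact ih _

theorem iotaL_zero_of_mem (l : List C.X) (v : C.X) (hv : v ∈ l) (σ : C.carrier)
    (h : C.ι v σ = 0) : C.iotaL l σ = 0 := by
  induction l generalizing σ with
  | nil => simp at hv
  | cons w l ih =>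
    simp only [CartanCalculus.iotaL, LinearMap.comp_apply]
    rcases List.mem_cons.1 hv with rfl | hv
    · rw [h, map_zero]
    · exact ih hv _ (by rw [C.ι_ι, h]; simp)

theorem iotaL_zero_of_not_nodup (l : List C.X) (hl : ¬ l.Nodup) (σ : C.carrier) :
    C.iotaL l σ = 0 := by
  induction l generalizing σ with
  | nil => simp at hl
  | cons w l ih =>
    simp only [CartanCalculus.iotaL, LinearMap.comp_apply]
    by_cases hw : w ∈ l
    · exact iotaL_zero_of_mem C l w hw _ (by
        have h := C.ι_ι w w σ
        rw [eq_neg_iff_add_eq_zero, ← two_smul ℝ] at h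
        exact (smul_eq_zero.1 h).resolve_left two_ne_zero)
    · exact ih (fun h => hl (List.nodup_cons.2 ⟨hw, h⟩)) _

theorem iotaL_set (l : List C.X) (i : ℕ) (hi : i < l.length) (σ : C.carrier) :
    ∃ Λ : C.X →ₗ[ℝ] C.carrier, ∀ a, C.iotaL (l.set i a) σ = Λ a := by
  induction l generalizing σ i with
  | nil => simp at hi
  | cons w l ih =>
    cases i with
    | zero => exact ⟨(C.iotaL l) ∘ₗ (C.ι.flip σ), fun a => rfl⟩
    | succ i => exact ih i (by simpa using hi) _

theorem iotaL_deg (l : List C.X) (p : ℤ) (σ : C.carrier) (h : σ ∈ C.deg p) :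
    C.iotaL l σ ∈ C.deg (p - l.length) := by
  induction l generalizing σ p with
  | nil => simpa [CartanCalculus.iotaL] using h
  | cons w l ih =>
    have := ih _ _ (C.ι_deg w p σ h)
    simp only [CartanCalculus.iotaL, LinearMap.comp_apply, List.length_cons]
    convert this using 2
    push_cast; ring

variable (μ : 𝔤 →ₗ[ℝ] C.carrier)

theorem skew (hμvan : ∀ x : 𝔤, C.ι (ρ x) (μ x) = 0) (x y : 𝔤) :
    C.ι (ρ x) (μ y) = - C.ι (ρ y) (μ x) := by
  have h := hμvan (x + y)
  simp only [map_add, LinearMap.add_apply, hμvan] at h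
  rw [eq_neg_iff_add_eq_zero, ← h]; abel

theorem lowerF_eq_M (k : ℕ) (x : Fin (k + 1) → 𝔤) :
    C.lowerF ρ (fun y => μ y) (k + 1) x
      = M C ρ (List.ofFn fun i : Fin k => x i.castSucc) (μ (x (Fin.last k))) := by
  simp only [CartanCalculus.lowerF, M, List.map_ofFn]; rfl

theorem lowerF_front (hμvan : ∀ x : 𝔤, C.ι (ρ x) (μ x) = 0) (k : ℕ) (x : Fin (k + 1) → 𝔤) :
    C.lowerF ρ (fun y => μ y) (k + 1) x
      = ((-1 : ℝ) ^ k) • M C ρ (List.ofFn fun i : Fin k => x i.succ) (μ (x 0)) := by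
  rw [lowerF_eq_M]
  cases k with
  | zero => simp [M_nil]
  | succ k =>
    have h2 : (List.ofFn fun i : Fin (k + 1) => x i.succ)
        = (List.ofFn fun i : Fin k => x i.succ.castSucc) ++ [x (Fin.last (k + 1))] := by
      rw [List.ofFn_succ', List.concat_eq_append]; rfl
    rw [h2, M_concat, ι_M, List.ofFn_succ, M_cons, List.length_ofFn,
      skew C ρ μ hμvan _ (x 0), M_neg, smul_smul, Fin.castSucc_zero,
      skew C ρ μ hμvan (x 0), M_neg]
    have : (-1 : ℝ) ^ (k + 1) * (-1) ^ k = -1 := by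
      rw [pow_succ, mul_right_comm, ← mul_pow]; simp
    rw [this]; simp

theorem lowerF_list (hμvan : ∀ x : 𝔤, C.ι (ρ x) (μ x) = 0) (k : ℕ) (w : 𝔤) (m : List 𝔤)
    (hm : m.length = k) :
    C.lowerF ρ (fun y => μ y) (k + 1) (listToFun (k + 1) (w :: m))
      = ((-1 : ℝ) ^ k) • M C ρ m (μ w) := by
  rw [lowerF_front C ρ μ hμvan]
  congr 2
  subst hm
  apply List.ext_getElem
  · simp
  · intro i h1 h2
    simp [listToFun, h2]

theorem dCE_eq (hμvan : ∀ x : 𝔤, C.ι (ρ x) (μ x) = 0) (k : ℕ) (x : Fin (k + 1 + 1) → 𝔤) :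
    dCE (k + 1) (C.lowerF ρ (fun y => μ y) (k + 1)) x
      = S (fun w m => ((-1 : ℝ) ^ k) • M C ρ m (μ w)) (List.ofFn x) := by
  rw [← S_eq]
  unfold dCE
  refine Finset.sum_congr rfl fun i _ => Finset.sum_congr rfl fun j _ => ?_
  split_ifs with h
  · rw [lowerF_list C ρ μ hμvan]
    have hj := j.2
    have e1 : ((List.ofFn x).eraseIdx (j : ℕ)).length = k + 1 := by
      rw [List.length_eraseIdx_of_lt] <;> simp
      omega
    rw [List.length_eraseIdx_of_lt (by omega)]
    omega
  · rfl

theorem S_smul (c : ℝ) (hc : c = 1 ∨ c = -1) (G : 𝔤 → List 𝔤 → C.carrier) (l : List 𝔤) :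
    S (fun z m => c • G z m) l = c • S G l := by
  rcases hc with rfl | rfl
  · simp
  · simp [S_neg]

theorem main_eq (ω : C.carrier) (hμequiv : ∀ x y : 𝔤, C.L (ρ x) (μ y) = μ ⁅x, y⁆)
    (hμmom : ∀ x : 𝔤, C.d (μ x) = - C.ι (ρ x) ω)
    (hμvan : ∀ x : 𝔤, C.ι (ρ x) (μ x) = 0) (k : ℕ) (hk : 1 ≤ k) (x : Fin (k + 1) → 𝔤) :
    dCE k (C.lowerF ρ (fun y => μ y) k) x
            + ((-1 : ℝ) ^ (k + 1)) • C.d (C.lowerF ρ (fun y => μ y) (k + 1) x)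
          = ((-1 : ℝ) ^ k) • C.lower ρ (k + 1) ω x := by
  obtain ⟨k, rfl⟩ : ∃ j, k = j + 1 := ⟨k - 1, by omega⟩
  have hl : C.lower ρ (k + 1 + 1) ω x = M C ρ (List.ofFn x) ω := by
    simp only [CartanCalculus.lower, M, List.map_ofFn]; rfl
  rw [dCE_eq C ρ μ hμvan, S_smul C _ (neg_one_pow_eq_or ℝ k), hl,
    lowerF_front C ρ μ hμvan, map_smul]
  have h := d_M C ρ (List.ofFn fun i : Fin (k + 1) => x i.succ) (μ (x 0))
  rw [List.length_ofFn] at h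
  rw [h, List.ofFn_succ, M_cons, hμmom, M_neg]
  simp only [S, M_cons, hμequiv, skew C ρ μ hμvan _ (x 0), M_neg]
  have hT : T (fun z m => M C ρ m (μ ⁅z, x 0⁆)) (List.ofFn fun i : Fin (k + 1) => x i.succ)
      = - T (fun z m => M C ρ m (μ ⁅x 0, z⁆)) (List.ofFn fun i : Fin (k + 1) => x i.succ) := by
    rw [← T_neg]
    congr 1; funext z m
    rw [← lie_skew, map_neg, M_neg]
  rw [hT, S_neg]
  simp only [pow_succ, mul_neg_one, neg_neg, mul_neg, mul_one]
  module

theorem alt (hμvan : ∀ x : 𝔤, C.ι (ρ x) (μ x) = 0) (k : ℕ) :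
    IsAlternating (C.lowerF ρ (fun y => μ y) k) := by
  cases k with
  | zero => intro x i; exact i.elim0
  | succ k =>
    have key : ∀ (x : Fin (k + 1) → 𝔤) (i : Fin k), x i.castSucc = x (Fin.last k) →
        C.lowerF ρ (fun y => μ y) (k + 1) x = 0 := by
      intro x i h
      refine iotaL_zero_of_mem C _ (ρ (x i.castSucc)) (by simp [List.mem_ofFn]) _ ?_
      rw [h]; exact hμvan _
    intro x i j hij h
    induction i using Fin.lastCases with
    | last =>
      induction j using Fin.lastCases with
      | last => exact absurd rfl hij
      | cast j => exact key x j h.symm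
    | cast i =>
      induction j using Fin.lastCases with
      | last => exact key x i h
      | cast j =>
        refine iotaL_zero_of_not_nodup C _ ?_ _
        rw [List.nodup_ofFn]
        intro hinj
        exact hij (congrArg _ (hinj (a₁ := i) (a₂ := j) (congrArg ρ h)))

theorem multi (k : ℕ) : IsMultilinear (C.lowerF ρ (fun y => μ y) k) := by
  cases k with
  | zero => intro x i; exact i.elim0
  | succ k =>
    intro x i
    obtain ⟨Λ, hΛ⟩ : ∃ Λ : 𝔤 →ₗ[ℝ] C.carrier, ∀ a,
        C.lowerF ρ (fun y => μ y) (k + 1) (Function.update x i a) = Λ a := by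
      induction i using Fin.lastCases with
      | last =>
        refine ⟨(C.iotaL (List.ofFn (fun i : Fin k => ρ (x i.castSucc)))) ∘ₗ μ, fun a => ?_⟩
        simp [CartanCalculus.lowerF]
      | cast i =>
        obtain ⟨Λ, hΛ⟩ := iotaL_set C (List.ofFn (fun i : Fin k => ρ (x i.castSucc))) i
          (by simp) (μ (x (Fin.last k)))
        refine ⟨Λ ∘ₗ (ρ : 𝔤 →ₗ[ℝ] C.X), fun a => ?_⟩
        simp only [LinearMap.comp_apply, LieHom.coe_toLinearMap]
        rw [← hΛ]
        simp only [CartanCalculus.lowerF]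
        rw [Function.update_of_ne (Fin.castSucc_lt_last i).ne']
        congr 2
        apply List.ext_getElem
        · simp
        · intro j h1 h2
          simp [List.getElem_set, Function.update_apply, Fin.ext_iff, eq_comm, apply_ite ρ]
    simp only [hΛ]
    exact ⟨fun a b => map_add _ _ _, fun c a => map_smul _ _ _⟩

theorem degF (n : ℕ) (hμdeg : ∀ x : 𝔤, μ x ∈ C.deg ((n : ℤ) - 1)) (k : ℕ)
    (x : Fin k → 𝔤) : C.lowerF ρ (fun y => μ y) k x ∈ C.deg ((n : ℤ) - k) := by
  cases k with
  | zero => exact Submodule.zero_mem _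
  | succ k =>
    have := iotaL_deg C (List.ofFn (fun i : Fin k => ρ (x i.castSucc))) _ _
      (hμdeg (x (Fin.last k)))
    simp only [CartanCalculus.lowerF]
    convert this using 2
    simp; ring

theorem varsigma_succ (k : ℕ) : varsigma (k + 1) = (-1 : ℝ) ^ (k + 1) * varsigma k := by
  unfold varsigma
  have : (k + 1) * (k + 1 + 1) / 2 = (k + 1) + k * (k + 1) / 2 := by
    have : (k + 1) * (k + 1 + 1) = k * (k + 1) + (k + 1) * 2 := by ring
    rw [this, Nat.add_mul_div_right _ _ (by norm_num)]; ring
  rw [this, pow_add]; ring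

theorem sum_eq (c : ℝ) (k : ℕ) (ψ : (Fin k → 𝔤) → C.carrier) (x : Fin (k + 1) → 𝔤) :
    (∑ i : Fin (k + 1), ∑ j : Fin (k + 1),
        if (i : ℕ) < (j : ℕ) then
          ((-1 : ℝ) ^ ((i : ℕ) + (j : ℕ) + 1)) •
            (c • ψ (listToFun k
              (⁅x i, x j⁆ :: (((List.ofFn x).eraseIdx (j : ℕ)).eraseIdx (i : ℕ)))))
        else 0) = (-c) • dCE k ψ x := by
  unfold dCE
  simp only [Finset.smul_sum]
  refine Finset.sum_congr rfl fun i _ => Finset.sum_congr rfl fun j _ => ?_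
  split_ifs
  · rw [smul_smul, smul_smul]; congr 1; ring
  · simp

end CartanAux

/-- Cartan cocycles give homotopy moment maps,
Prop. 4.4 of the paper. If `μ : 𝔤 → Ω^{n-1}` is linear, equivariant, with
`d(μ x) = -ι_{v_x}ω` and `ι_{v_x}(μ x) = 0` (so `ω - μ` is a Cartan cocycle),
then `f_k(x₁,…,x_k) := ς(k)·ι(v_{x₁}∧⋯∧v_{x_{k-1}})(μ x_k)` is a homotopy
moment map for `ω`; equivalently `φ_k := μ_k` satisfies `d_tot φ = ω̃`. -/
theorem cartan_cocycle_gives_momentMap (C : CartanCalculus) {𝔤 : Type} [LieRing 𝔤]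
    [LieAlgebra ℝ 𝔤] (ρ : 𝔤 →ₗ⁅ℝ⁆ C.X) (n : ℕ) (hn : 1 ≤ n) (ω : C.carrier)
    (hω : ω ∈ C.deg ((n : ℤ) + 1)) (hcl : C.d ω = 0)
    (hinv : ∀ x : 𝔤, C.L (ρ x) ω = 0)
    (μ : 𝔤 →ₗ[ℝ] C.carrier) (hμdeg : ∀ x : 𝔤, μ x ∈ C.deg ((n : ℤ) - 1))
    (hμequiv : ∀ x y : 𝔤, C.L (ρ x) (μ y) = μ ⁅x, y⁆)
    (hμmom : ∀ x : 𝔤, C.d (μ x) = - C.ι (ρ x) ω)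
    (hμvan : ∀ x : 𝔤, C.ι (ρ x) (μ x) = 0) :
    IsMomentMap C ρ n ω (fun k x => varsigma k • C.lowerF ρ (fun y => μ y) k x) ∧
    ((∀ x : 𝔤, C.d (C.lowerF ρ (fun y => μ y) 1 (fun _ => x)) = - C.ι (ρ x) ω) ∧
     (∀ k : ℕ, 1 ≤ k → k + 1 ≤ n → ∀ x : Fin (k + 1) → 𝔤,
        dCE k (C.lowerF ρ (fun y => μ y) k) x
            + ((-1 : ℝ) ^ (k + 1)) • C.d (C.lowerF ρ (fun y => μ y) (k + 1) x)
          = ((-1 : ℝ) ^ k) • C.lower ρ (k + 1) ω x) ∧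
     (∀ x : Fin (n + 1) → 𝔤,
        dCE n (C.lowerF ρ (fun y => μ y) n) x
          = ((-1 : ℝ) ^ n) • C.lower ρ (n + 1) ω x)) := by
  have main := CartanAux.main_eq C ρ μ ω hμequiv hμmom hμvan
  have h1 : ∀ x : 𝔤, C.d (C.lowerF ρ (fun y => μ y) 1 (fun _ => x)) = - C.ι (ρ x) ω := by
    intro x
    rw [CartanAux.lowerF_eq_M]
    exact hμmom x
  have hlast : ∀ x : Fin (n + 1) → 𝔤, dCE n (C.lowerF ρ (fun y => μ y) n) x
          = ((-1 : ℝ) ^ n) • C.lower ρ (n + 1) ω x := by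
    intro x
    have h := main n hn x
    have h0 := CartanAux.degF C ρ μ n hμdeg (n + 1) x
    rw [C.deg_neg _ (by push_cast; omega), Submodule.mem_bot] at h0
    simpa [h0] using h
  have sq : ∀ k : ℕ, (-1 : ℝ) ^ k * (-1) ^ k = 1 := fun k => by
    rw [← mul_pow]; simp
  refine ⟨⟨?_, ?_, ?_, ?_⟩, h1, fun k hk _ x => main k hk x, hlast⟩
  · intro k _ _
    refine ⟨?_, ?_, ?_⟩
    · intro x i
      have h := CartanAux.multi C ρ μ k x i
      exact ⟨fun a b => by simp only [h.1, smul_add],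
        fun c a => by simp only [h.2]; rw [smul_comm]⟩
    · intro x i j hij h
      simp only [CartanAux.alt C ρ μ hμvan k x i j hij h, smul_zero]
    · intro x
      exact Submodule.smul_mem _ _ (CartanAux.degF C ρ μ n hμdeg k x)
  · intro x
    simp only [map_smul, h1]
    simp [varsigma]
  · intro k hk _ x
    obtain ⟨k, rfl⟩ : ∃ j, k = j + 1 := ⟨k - 1, by omega⟩
    have h := main k (by omega) x
    simp only [Nat.add_sub_cancel]
    refine (CartanAux.sum_eq C (varsigma k) k (C.lowerF ρ (fun y => μ y) k) x).trans ?_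
    rw [eq_sub_of_add_eq h, map_smul, CartanAux.varsigma_succ, pow_succ]
    module
  · intro x
    refine (CartanAux.sum_eq C (varsigma n) n (C.lowerF ρ (fun y => μ y) n) x).trans ?_
    rw [hlast, CartanAux.varsigma_succ, pow_succ]
    module
end

section
/- (Existence criterion) Assume: 𝔤 is finite-dimensional; ε : Ω^0 → ℝ is a linear map whose restriction to ker(d : Ω^0 → Ω^1) is a linear isomorphism onto ℝ; H^j_CE(𝔤) ⊗ H^{n+1−j}(Ω) = 0 for every j = 1,…,n; and the alternating cocycle c : 𝔤^{n+1} → ℝ, c(x_1,…,x_{n+1}) := ε(ι(v_{x_1}∧⋯∧v_{x_{n+1}})ω), is a d_𝔤-coboundary (i.e., c = d_𝔤ψ for some alternating ψ : 𝔤^n → ℝ). Then there exists a homotopy moment map (f_1,…,f_n) for ω. -/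
/-- Iterated contraction lowers the degree by the number of vectors. -/
lemma CartanCalculus.iotaL_deg (C : CartanCalculus) (l : List C.X) (i : ℤ)
    (a : C.carrier) (ha : a ∈ C.deg i) :
    C.iotaL l a ∈ C.deg (i - (l.length : ℤ)) := by
  induction l generalizing i a with
  | nil => simpa [CartanCalculus.iotaL] using ha
  | cons v vs ih =>
      have h1 : C.ι v a ∈ C.deg (i - 1) := C.ι_deg v i a ha
      have h2 := ih (i - 1) (C.ι v a) h1
      have heq : i - 1 - (vs.length : ℤ) = i - ((v :: vs).length : ℤ) := by
        simp only [List.length_cons]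
        push_cast
        ring
      have h3 : C.iotaL (v :: vs) a = C.iotaL vs (C.ι v a) := rfl
      rw [h3, ← heq]
      exact h2

/-- The full contraction of `ω ∈ Ω^{n+1}` by `n+1` vectors lands in `Ω^0`. -/
lemma CartanCalculus.lower_mem_deg_zero (C : CartanCalculus) {𝔤 : Type} [LieRing 𝔤]
    [LieAlgebra ℝ 𝔤] (ρ : 𝔤 →ₗ⁅ℝ⁆ C.X) (n : ℕ) (ω : C.carrier)
    (hω : ω ∈ C.deg ((n : ℤ) + 1)) (x : Fin (n + 1) → 𝔤) :
    C.lower ρ (n + 1) ω x ∈ C.deg 0 := by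
  have h := C.iotaL_deg (List.ofFn (fun i => ρ (x i))) ((n : ℤ) + 1) ω hω
  have heq : (n : ℤ) + 1 - ((List.ofFn (fun i : Fin (n + 1) => ρ (x i))).length : ℤ)
      = 0 := by
    simp
  show C.iotaL (List.ofFn (fun i => ρ (x i))) ω ∈ C.deg 0
  rw [← heq]
  exact h

/-- The cochain `c : 𝔤^{n+1} → ℝ`, `c(x₁,…,x_{n+1}) = ε(ι(v_{x₁}∧⋯∧v_{x_{n+1}})ω)`,
i.e. `(-1)^n ω_{n+1}` evaluated by `ε : Ω^0 → ℝ` (without the sign). -/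
def obstructionCocycle (C : CartanCalculus) {𝔤 : Type} [LieRing 𝔤] [LieAlgebra ℝ 𝔤]
    (ρ : 𝔤 →ₗ⁅ℝ⁆ C.X) (n : ℕ) (ω : C.carrier) (hω : ω ∈ C.deg ((n : ℤ) + 1))
    (ε : C.deg 0 →ₗ[ℝ] ℝ) : (Fin (n + 1) → 𝔤) → ℝ :=
  fun x => ε ⟨C.lower ρ (n + 1) ω x, C.lower_mem_deg_zero ρ n ω hω x⟩

namespace MM

section ext
variable {𝔤 : Type} [LieRing 𝔤] [LieAlgebra ℝ 𝔤]

lemma ext_ind {P : ExteriorAlgebra ℝ 𝔤 → Prop}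
    (one : P 1) (smul : ∀ (r : ℝ) x, P x → P (r • x))
    (add : ∀ x y, P x → P y → P (x + y))
    (ι_mul : ∀ x m, P x → P (ExteriorAlgebra.ι ℝ m * x)) : ∀ x, P x := by
  intro x
  refine CliffordAlgebra.left_induction (Q := (0 : QuadraticForm ℝ 𝔤)) (P := P) ?_ add ι_mul x
  intro r
  rw [Algebra.algebraMap_eq_smul_one]
  exact smul r _ one

lemma ι_anti (x y : 𝔤) (u : ExteriorAlgebra ℝ 𝔤) :
    ExteriorAlgebra.ι ℝ x * (ExteriorAlgebra.ι ℝ y * u)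
      = - (ExteriorAlgebra.ι ℝ y * (ExteriorAlgebra.ι ℝ x * u)) := by
  rw [← mul_assoc, ← mul_assoc, ← neg_mul]
  congr 1
  exact eq_neg_of_add_eq_zero_left (ExteriorAlgebra.ι_add_mul_swap x y)

lemma ι_sq (x : 𝔤) (u : ExteriorAlgebra ℝ 𝔤) :
    ExteriorAlgebra.ι ℝ x * (ExteriorAlgebra.ι ℝ x * u) = 0 := by
  rw [← mul_assoc, ExteriorAlgebra.ι_sq_zero, zero_mul]

lemma exists_fold (f : 𝔤 →ₗ[ℝ] ExteriorAlgebra ℝ 𝔤 × ExteriorAlgebra ℝ 𝔤 →ₗ[ℝ] ExteriorAlgebra ℝ 𝔤)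
    (hf : ∀ m x fx, f m (ExteriorAlgebra.ι ℝ m * x, f m (x, fx)) = 0) :
    ∃ T : ExteriorAlgebra ℝ 𝔤 →ₗ[ℝ] ExteriorAlgebra ℝ 𝔤, T 1 = 0 ∧
      ∀ m x, T (ExteriorAlgebra.ι ℝ m * x) = f m (x, T x) := by
  refine ⟨CliffordAlgebra.foldr' (0 : QuadraticForm ℝ 𝔤) f (fun m x fx => ?_) 0, ?_, fun m x => ?_⟩
  · rw [zero_apply, zero_smul]; exact hf m x fx
  · have := CliffordAlgebra.foldr'_algebraMap (0 : QuadraticForm ℝ 𝔤) f (fun m x fx => by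
      rw [zero_apply, zero_smul]; exact hf m x fx) 0 1
    rw [map_one, smul_zero] at this
    exact this
  · exact CliffordAlgebra.foldr'_ι_mul (0 : QuadraticForm ℝ 𝔤) f (fun m x fx => by
      rw [zero_apply, zero_smul]; exact hf m x fx) 0 m x

lemma exists_theta (x : 𝔤) : ∃ T : ExteriorAlgebra ℝ 𝔤 →ₗ[ℝ] ExteriorAlgebra ℝ 𝔤, T 1 = 0 ∧
    ∀ y u, T (ExteriorAlgebra.ι ℝ y * u)
      = ExteriorAlgebra.ι ℝ ⁅x, y⁆ * u + ExteriorAlgebra.ι ℝ y * T u := by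
  obtain ⟨T, h1, h2⟩ := exists_fold (𝔤 := 𝔤)
    (LinearMap.mk₂ ℝ (fun y p => ExteriorAlgebra.ι ℝ ⁅x, y⁆ * p.1 + ExteriorAlgebra.ι ℝ y * p.2)
      (fun a b p => by simp only [lie_add, map_add, add_mul]; abel)
      (fun c a p => by simp only [lie_smul, map_smul, smul_mul_assoc, smul_add])
      (fun a p q => by simp only [Prod.fst_add, Prod.snd_add, mul_add]; abel)
      (fun c a p => by simp only [Prod.smul_fst, Prod.smul_snd, mul_smul_comm, smul_add]))
    (fun m u v => by
      simp only [LinearMap.mk₂_apply, mul_add, ι_sq, add_zero]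
      rw [ι_anti]; simp)
  exact ⟨T, h1, fun y u => by rw [h2]; rfl⟩

noncomputable def thetaFun (x : 𝔤) : ExteriorAlgebra ℝ 𝔤 →ₗ[ℝ] ExteriorAlgebra ℝ 𝔤 :=
  (exists_theta x).choose

lemma thetaFun_one (x : 𝔤) : thetaFun x 1 = 0 := (exists_theta x).choose_spec.1

lemma thetaFun_mul (x y : 𝔤) (u) : thetaFun x (ExteriorAlgebra.ι ℝ y * u)
      = ExteriorAlgebra.ι ℝ ⁅x, y⁆ * u + ExteriorAlgebra.ι ℝ y * thetaFun x u :=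
  (exists_theta x).choose_spec.2 y u

lemma thetaFun_add (x y : 𝔤) (u) : thetaFun (x + y) u = thetaFun x u + thetaFun y u := by
  induction u using ext_ind with
  | one => simp [thetaFun_one]
  | smul r u h => simp [h]
  | add u v h h' => simp only [map_add, h, h']; abel
  | ι_mul u m h => simp only [thetaFun_mul, h, add_lie, map_add, add_mul, mul_add]; abel

lemma thetaFun_smul (c : ℝ) (x : 𝔤) (u) : thetaFun (c • x) u = c • thetaFun x u := by
  induction u using ext_ind with
  | one => simp [thetaFun_one]
  | smul r u h => simp [h, smul_comm r c]
  | add u v h h' => simp only [map_add, h, h', smul_add]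
  | ι_mul u m h => simp only [thetaFun_mul, h, smul_lie, map_smul, smul_mul_assoc, mul_smul_comm, smul_add]

lemma thetaFun_comm (x y : 𝔤) (u) :
    thetaFun x (thetaFun y u) = thetaFun y (thetaFun x u) + thetaFun ⁅x, y⁆ u := by
  induction u using ext_ind with
  | one => simp [thetaFun_one]
  | smul r u h => simp [h]
  | add u v h h' => simp only [map_add, h, h']; abel
  | ι_mul u m h =>
    simp only [thetaFun_mul, h, map_add, mul_add, lie_lie, map_sub, sub_mul]
    abel

lemma exists_bd : ∃ T : ExteriorAlgebra ℝ 𝔤 →ₗ[ℝ] ExteriorAlgebra ℝ 𝔤, T 1 = 0 ∧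
    ∀ y u, T (ExteriorAlgebra.ι ℝ y * u) = - thetaFun y u - ExteriorAlgebra.ι ℝ y * T u := by
  obtain ⟨T, h1, h2⟩ := exists_fold (𝔤 := 𝔤)
    (LinearMap.mk₂ ℝ (fun y p => - thetaFun y p.1 - ExteriorAlgebra.ι ℝ y * p.2)
      (fun a b p => by simp only [thetaFun_add, map_add, add_mul]; abel)
      (fun c a p => by simp only [thetaFun_smul, map_smul, smul_mul_assoc, smul_sub, smul_neg])
      (fun a p q => by simp only [Prod.fst_add, Prod.snd_add, mul_add, map_add]; abel)
      (fun c a p => by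
        simp only [Prod.smul_fst, Prod.smul_snd, mul_smul_comm, smul_sub, smul_neg, map_smul]))
    (fun m u v => by
      simp only [LinearMap.mk₂_apply, mul_sub, ι_sq, thetaFun_mul]
      simp)
  exact ⟨T, h1, fun y u => by rw [h2]; rfl⟩

noncomputable def bd : ExteriorAlgebra ℝ 𝔤 →ₗ[ℝ] ExteriorAlgebra ℝ 𝔤 := exists_bd.choose

lemma bd_one : bd (𝔤 := 𝔤) 1 = 0 := exists_bd.choose_spec.1

lemma bd_mul (y : 𝔤) (u) :
    bd (ExteriorAlgebra.ι ℝ y * u) = - thetaFun y u - ExteriorAlgebra.ι ℝ y * bd u :=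
  exists_bd.choose_spec.2 y u

lemma theta_bd (x : 𝔤) (u) : thetaFun x (bd u) = bd (thetaFun x u) := by
  induction u using ext_ind with
  | one => simp [thetaFun_one, bd_one]
  | smul r u h => simp [h]
  | add u v h h' => simp only [map_add, h, h']
  | ι_mul u m h =>
    simp only [thetaFun_mul, bd_mul, map_add, map_sub, map_neg, h]
    rw [thetaFun_comm x m]
    abel

lemma bd_bd (u : ExteriorAlgebra ℝ 𝔤) : bd (bd u) = 0 := by
  induction u using ext_ind with
  | one => simp [bd_one]
  | smul r u h => simp [h]
  | add u v h h' => simp only [map_add, h, h', add_zero]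
  | ι_mul u m h =>
    simp only [bd_mul, map_sub, map_neg, h, theta_bd, mul_zero]
    abel

noncomputable def wd (l : List 𝔤) : ExteriorAlgebra ℝ 𝔤 := (l.map (ExteriorAlgebra.ι ℝ)).prod

lemma wd_cons (y : 𝔤) (l) : wd (y :: l) = ExteriorAlgebra.ι ℝ y * wd l := by simp [wd]

lemma wd_ofFn {k : ℕ} (x : Fin k → 𝔤) : wd (List.ofFn x) = ExteriorAlgebra.ιMulti ℝ k x := by
  rw [wd, ExteriorAlgebra.ιMulti_apply, List.map_ofFn]; rfl

lemma theta_wd {k : ℕ} (y : 𝔤) (x : Fin k → 𝔤) : thetaFun y (wd (List.ofFn x)) =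
    ∑ j : Fin k, ((-1 : ℝ) ^ (j : ℕ)) • wd (⁅y, x j⁆ :: (List.ofFn x).eraseIdx j) := by
  induction k with
  | zero => simp [wd, thetaFun_one]
  | succ k ih =>
    rw [List.ofFn_succ, wd_cons, thetaFun_mul, ih, Fin.sum_univ_succ, Finset.mul_sum]
    congr 1
    · simp [wd_cons]
    · refine Finset.sum_congr rfl fun j _ => ?_
      simp only [Fin.val_succ, List.eraseIdx_cons_succ, wd_cons, mul_smul_comm, pow_succ]
      rw [ι_anti]
      simp

lemma bd_wd {k : ℕ} (x : Fin k → 𝔤) : bd (wd (List.ofFn x)) =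
    ∑ i : Fin k, ∑ j : Fin k, if (i : ℕ) < (j : ℕ) then ((-1 : ℝ) ^ ((i : ℕ) + (j : ℕ))) •
       wd (⁅x i, x j⁆ :: (((List.ofFn x).eraseIdx (j : ℕ)).eraseIdx (i : ℕ))) else 0 := by
  induction k with
  | zero => simp [wd, bd_one]
  | succ k ih =>
    rw [List.ofFn_succ, wd_cons, bd_mul, ih, theta_wd, Fin.sum_univ_succ, sub_eq_add_neg]
    congr 1
    · rw [Fin.sum_univ_succ, ← Finset.sum_neg_distrib]
      simp [pow_succ]
    · rw [Finset.mul_sum, ← Finset.sum_neg_distrib]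
      refine Finset.sum_congr rfl fun i _ => ?_
      rw [Fin.sum_univ_succ, Finset.mul_sum, ← Finset.sum_neg_distrib]
      rw [if_neg (by simp), zero_add]
      refine Finset.sum_congr rfl fun j _ => ?_
      simp only [Fin.val_succ, List.eraseIdx_cons_succ, wd_cons, add_lt_add_iff_right]
      split_ifs
      · rw [ι_anti, mul_smul_comm, smul_neg]; congr 2; ring
      · simp

end ext
end MM

namespace MM

section lin
variable {𝔤 : Type} [LieRing 𝔤] [LieAlgebra ℝ 𝔤] {W : Type} [AddCommGroup W] [Module ℝ W]

lemma wd_listToFun (k : ℕ) (l : List 𝔤) (hl : l.length = k) :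
    ExteriorAlgebra.ιMulti ℝ k (listToFun k l) = wd l := by
  rw [← wd_ofFn]
  congr 1
  apply List.ext_getElem
  · simp [hl]
  · intro i h1 h2
    simp [listToFun, h2]

lemma exists_lin {k : ℕ} (ψ : (Fin k → 𝔤) → W) (hm : IsMultilinear ψ) (ha : IsAlternating ψ) :
    ∃ Ψ : ExteriorAlgebra ℝ 𝔤 →ₗ[ℝ] W, ∀ x, Ψ (ExteriorAlgebra.ιMulti ℝ k x) = ψ x := by
  let A : 𝔤 [⋀^Fin k]→ₗ[ℝ] W :=
    { toFun := ψ
      map_update_add' := fun {inst} x i a b => by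
        rw [Subsingleton.elim inst (instDecidableEqFin k)]; exact (hm x i).1 a b
      map_update_smul' := fun {inst} x i c a => by
        rw [Subsingleton.elim inst (instDecidableEqFin k)]; exact (hm x i).2 c a
      map_eq_zero_of_eq' := fun x i j h hij => ha x i j hij h }
  refine ⟨ExteriorAlgebra.liftAlternating (Pi.single k A), fun x => ?_⟩
  rw [ExteriorAlgebra.liftAlternating_apply_ιMulti, Pi.single_eq_same]
  rfl

lemma isMultilinear_lin (k : ℕ) (Ψ : ExteriorAlgebra ℝ 𝔤 →ₗ[ℝ] W) :
    IsMultilinear (fun x => Ψ (ExteriorAlgebra.ιMulti ℝ k x)) := by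
  intro x i
  refine ⟨fun a b => ?_, fun c a => ?_⟩
  · simp only [AlternatingMap.map_update_add, map_add]
  · simp only [AlternatingMap.map_update_smul, map_smul]

lemma isAlternating_lin (k : ℕ) (Ψ : ExteriorAlgebra ℝ 𝔤 →ₗ[ℝ] W) :
    IsAlternating (fun x => Ψ (ExteriorAlgebra.ιMulti ℝ k x)) := by
  intro x i j hij h
  simp only [(ExteriorAlgebra.ιMulti ℝ k).map_eq_zero_of_eq x h hij, map_zero]

lemma len_aux {k : ℕ} (x : Fin (k+1) → 𝔤) (i j : Fin (k+1)) (h : (i:ℕ) < j) (y : 𝔤) :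
    (y :: (((List.ofFn x).eraseIdx (j : ℕ)).eraseIdx (i : ℕ))).length = k := by
  have := i.2
  have := j.2
  have h1 : ((List.ofFn x).eraseIdx (j : ℕ)).length = k := by
    rw [List.length_eraseIdx_of_lt] <;> simp <;> omega
  rw [List.length_cons, List.length_eraseIdx_of_lt, h1] <;> omega

lemma dCE_eq (k : ℕ) (ψ : (Fin k → 𝔤) → W) (Ψ : ExteriorAlgebra ℝ 𝔤 →ₗ[ℝ] W)
    (h : ∀ x, Ψ (ExteriorAlgebra.ιMulti ℝ k x) = ψ x) (x : Fin (k + 1) → 𝔤) :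
    dCE k ψ x = Ψ (bd (ExteriorAlgebra.ιMulti ℝ (k + 1) x)) := by
  rw [← wd_ofFn, bd_wd, dCE, map_sum]
  refine Finset.sum_congr rfl fun i _ => ?_
  rw [map_sum]
  refine Finset.sum_congr rfl fun j _ => ?_
  split_ifs with hij
  · rw [← h, map_smul, wd_listToFun _ _ (len_aux x i j hij _)]
  · simp

lemma span_ind {k : ℕ} (S : Submodule ℝ (ExteriorAlgebra ℝ 𝔤))
    (h : ∀ x : Fin k → 𝔤, ExteriorAlgebra.ιMulti ℝ k x ∈ S) : (⋀[ℝ]^k 𝔤) ≤ S := by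
  rw [← ExteriorAlgebra.ιMulti_span_fixedDegree, Submodule.span_le]
  rintro _ ⟨x, rfl⟩
  exact h x

lemma ιMulti_mem (k : ℕ) (x : Fin k → 𝔤) : ExteriorAlgebra.ιMulti ℝ k x ∈ (⋀[ℝ]^k 𝔤) :=
  ExteriorAlgebra.ιMulti_range ℝ k ⟨x, rfl⟩

lemma bd_mem (k : ℕ) : (⋀[ℝ]^(k+1) 𝔤) ≤ (⋀[ℝ]^k 𝔤).comap bd := by
  refine span_ind _ fun x => ?_
  rw [Submodule.mem_comap, ← wd_ofFn, bd_wd]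
  refine Submodule.sum_mem _ fun i _ => Submodule.sum_mem _ fun j _ => ?_
  split_ifs with hij
  · rw [← wd_listToFun k _ (len_aux x i j hij _)]
    exact Submodule.smul_mem _ _ (ιMulti_mem k _)
  · exact zero_mem _

lemma bd_deg_one (u : ExteriorAlgebra ℝ 𝔤) (hu : u ∈ (⋀[ℝ]^1 𝔤)) : bd u = 0 := by
  have : (⋀[ℝ]^1 𝔤) ≤ LinearMap.ker (bd (𝔤 := 𝔤)) := by
    refine span_ind _ fun x => ?_
    rw [LinearMap.mem_ker, ← wd_ofFn, bd_wd]
    simp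
  exact this hu

lemma exact_of_CE (j : ℕ)
    (H : ∀ ψ : (Fin (j + 1) → 𝔤) → ℝ, IsMultilinear ψ → IsAlternating ψ →
        (∀ x : Fin (j + 2) → 𝔤, dCE (j + 1) ψ x = 0) →
        ∃ χ : (Fin j → 𝔤) → ℝ, IsMultilinear χ ∧ IsAlternating χ ∧
          ∀ x : Fin (j + 1) → 𝔤, dCE j χ x = ψ x)
    (u : ExteriorAlgebra ℝ 𝔤) (hu : u ∈ (⋀[ℝ]^(j+1) 𝔤)) (hbd : bd u = 0) :
    ∃ w ∈ (⋀[ℝ]^(j+2) 𝔤), bd w = u := by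
  by_contra hcon
  have hnot : u ∉ (⋀[ℝ]^(j+2) 𝔤).map bd := by
    rintro ⟨w, hw, rfl⟩
    exact hcon ⟨w, hw, rfl⟩
  obtain ⟨Ψ, h1, h2⟩ := Submodule.exists_le_ker_of_notMem hnot
  obtain ⟨χ, hm, ha, hχ⟩ := H _ (isMultilinear_lin (j+1) Ψ) (isAlternating_lin (j+1) Ψ) (fun x => by
    rw [dCE_eq _ _ Ψ (fun _ => rfl)]
    exact h2 ⟨_, ιMulti_mem _ x, rfl⟩)
  obtain ⟨X, hX⟩ := exists_lin χ hm ha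
  have : (⋀[ℝ]^(j+1) 𝔤) ≤ LinearMap.ker (X ∘ₗ bd - Ψ) := by
    refine span_ind _ fun x => ?_
    have := hχ x
    rw [dCE_eq _ _ X hX] at this
    simp [-ExteriorAlgebra.ιMulti_succ_apply, this]
  have := this hu
  rw [LinearMap.mem_ker, LinearMap.sub_apply, LinearMap.comp_apply, hbd, map_zero, zero_sub,
    neg_eq_zero] at this
  exact h1 this

end lin

section cartan
variable (C : CartanCalculus) {𝔤 : Type} [LieRing 𝔤] [LieAlgebra ℝ 𝔤] (ρ : 𝔤 →ₗ⁅ℝ⁆ C.X)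

lemma ι_ι_self (v : C.X) (a : C.carrier) : C.ι v (C.ι v a) = 0 := by
  have h := C.ι_ι v v a
  have h2 : (2 : ℝ) • C.ι v (C.ι v a) = 0 := by
    rw [two_smul]; nth_rewrite 1 [h]; simp
  exact (smul_eq_zero.mp h2).resolve_left two_ne_zero

noncomputable def contr : ExteriorAlgebra ℝ 𝔤 →ₐ[ℝ] Module.End ℝ C.carrier :=
  ExteriorAlgebra.lift ℝ ⟨C.ι ∘ₗ (ρ : 𝔤 →ₗ[ℝ] C.X), fun m => by
    ext a
    exact ι_ι_self C _ a⟩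

lemma contr_mul (x : 𝔤) (u) (a : C.carrier) :
    contr C ρ (ExteriorAlgebra.ι ℝ x * u) a = C.ι (ρ x) (contr C ρ u a) := by
  rw [map_mul, contr, ExteriorAlgebra.lift_ι_apply]
  rfl

lemma L_contr (ω : C.carrier) (hinv : ∀ x : 𝔤, C.L (ρ x) ω = 0) (x : 𝔤) (u) :
    C.L (ρ x) (contr C ρ u ω) = contr C ρ (thetaFun x u) ω := by
  induction u using ext_ind with
  | one => simp [thetaFun_one, hinv]
  | smul r u h => simp [h]
  | add u v h h' => simp only [map_add, h, h', LinearMap.add_apply]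
  | ι_mul u m h =>
    rw [thetaFun_mul, map_add, LinearMap.add_apply, contr_mul, contr_mul, contr_mul, ← h,
      LieHom.map_lie, ← C.cartan]
    simp [CartanCalculus.L]

lemma d_contr (ω : C.carrier) (hcl : C.d ω = 0) (hinv : ∀ x : 𝔤, C.L (ρ x) ω = 0) (u) :
    C.d (contr C ρ u ω) = - contr C ρ (bd u) ω := by
  induction u using ext_ind with
  | one => simp [bd_one, hcl]
  | smul r u h => simp [h]
  | add u v h h' => simp only [map_add, h, h', LinearMap.add_apply, neg_add]
  | ι_mul u m h =>
    rw [bd_mul, map_sub, map_neg, LinearMap.sub_apply, LinearMap.neg_apply, contr_mul, contr_mul,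
      ← L_contr C ρ ω hinv, ← neg_eq_iff_eq_neg.mpr h]
    simp [CartanCalculus.L]

lemma contr_swap (y : 𝔤) (l : List 𝔤) (a : C.carrier) :
    contr C ρ (wd l) (C.ι (ρ y) a) = (-1 : ℝ) ^ l.length • C.ι (ρ y) (contr C ρ (wd l) a) := by
  induction l with
  | nil => simp [wd]
  | cons z l ih =>
    rw [wd_cons, contr_mul, contr_mul, ih, C.ι_ι (ρ y)]
    simp [pow_succ]

lemma iotaL_eq (l : List 𝔤) (a : C.carrier) :
    C.iotaL (l.map ρ) a = (-1 : ℝ) ^ (l.length * (l.length - 1) / 2) • contr C ρ (wd l) a := by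
  induction l generalizing a with
  | nil => simp [wd, CartanCalculus.iotaL]
  | cons y l ih =>
    have : C.iotaL ((y :: l).map ρ) a = C.iotaL (l.map ρ) (C.ι (ρ y) a) := rfl
    rw [this, ih, contr_swap, wd_cons, contr_mul, smul_smul, ← pow_add, List.length_cons,
      Nat.triangle_succ]

lemma varsigma_lower (k : ℕ) (ω : C.carrier) (x : Fin k → 𝔤) :
    varsigma k • C.lower ρ k ω x
      = - ((-1 : ℝ) ^ k • contr C ρ (ExteriorAlgebra.ιMulti ℝ k x) ω) := by
  have : List.ofFn (fun i => ρ (x i)) = (List.ofFn x).map ρ := by rw [List.map_ofFn]; rfl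
  rw [CartanCalculus.lower, this, iotaL_eq, wd_ofFn, List.length_ofFn, varsigma, smul_smul,
    neg_mul, neg_smul]
  congr 2
  have h2 : k * (k + 1) / 2 = k * (k - 1) / 2 + k := by
    have := Nat.triangle_succ k
    rwa [Nat.add_sub_cancel, mul_comm] at this
  rw [h2, pow_add, mul_right_comm, ← pow_add, ← two_mul, pow_mul]
  simp

lemma contr_eq_lower (k : ℕ) (ω : C.carrier) (x : Fin k → 𝔤) :
    contr C ρ (ExteriorAlgebra.ιMulti ℝ k x) ω
      = ((-1 : ℝ) ^ (k * (k - 1) / 2)) • C.lower ρ k ω x := by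
  have : List.ofFn (fun i => ρ (x i)) = (List.ofFn x).map ρ := by rw [List.map_ofFn]; rfl
  rw [CartanCalculus.lower, this, iotaL_eq, wd_ofFn, List.length_ofFn, smul_smul, ← pow_add,
    ← two_mul, pow_mul]
  simp

lemma contr_deg (m : ℤ) (ω : C.carrier) (hω : ω ∈ C.deg m) (k : ℕ) (u)
    (hu : u ∈ (⋀[ℝ]^k 𝔤)) : contr C ρ u ω ∈ C.deg (m - k) := by
  have : (⋀[ℝ]^k 𝔤) ≤ (C.deg (m - k)).comap
      (LinearMap.applyₗ ω ∘ₗ (contr C ρ).toLinearMap) := by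
    refine span_ind _ fun x => ?_
    change contr C ρ (ExteriorAlgebra.ιMulti ℝ k x) ω ∈ C.deg (m - k)
    rw [contr_eq_lower]
    refine Submodule.smul_mem _ _ ?_
    have := C.iotaL_deg (List.ofFn (fun i => ρ (x i))) m ω hω
    rwa [List.length_ofFn] at this
  exact this hu

end cartan
end MM

namespace MM

lemma neg_dCE {𝔤 : Type} [LieRing 𝔤] [LieAlgebra ℝ 𝔤] {W : Type} [AddCommGroup W] [Module ℝ W]
    (k : ℕ) (ψ : (Fin k → 𝔤) → W) (Ψ : ExteriorAlgebra ℝ 𝔤 →ₗ[ℝ] W)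
    (h : ∀ x, Ψ (ExteriorAlgebra.ιMulti ℝ k x) = ψ x) (x : Fin (k + 1) → 𝔤) :
    (∑ i : Fin (k + 1), ∑ j : Fin (k + 1),
        if (i : ℕ) < (j : ℕ) then
          ((-1 : ℝ) ^ ((i : ℕ) + (j : ℕ) + 1)) •
            ψ (listToFun k
              (⁅x i, x j⁆ :: (((List.ofFn x).eraseIdx (j : ℕ)).eraseIdx (i : ℕ))))
        else 0) = - Ψ (bd (ExteriorAlgebra.ιMulti ℝ (k + 1) x)) := by
  rw [← dCE_eq k ψ Ψ h, dCE, ← Finset.sum_neg_distrib]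
  refine Finset.sum_congr rfl fun i _ => ?_
  rw [← Finset.sum_neg_distrib]
  refine Finset.sum_congr rfl fun j _ => ?_
  split_ifs
  · rw [pow_succ, mul_neg_one, neg_smul]
  · simp

lemma gen_inv {A B : Type} [AddCommGroup A] [Module ℝ A] [AddCommGroup B] [Module ℝ B]
    (T : A →ₗ[ℝ] B) : ∃ σ : B →ₗ[ℝ] A, ∀ a, T (σ (T a)) = T a := by
  obtain ⟨g, hg⟩ := T.rangeRestrict.exists_rightInverse_of_surjective T.range_rangeRestrict
  obtain ⟨σ, hσ⟩ := LinearMap.exists_extend g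
  refine ⟨σ, fun a => ?_⟩
  have h1 := LinearMap.congr_fun hσ (T.rangeRestrict a)
  have h2 := LinearMap.congr_fun hg (T.rangeRestrict a)
  have h3 : σ (T a) = g (T.rangeRestrict a) := h1
  rw [h3]
  exact congrArg Subtype.val h2

section main
variable (C : CartanCalculus) {𝔤 : Type} [LieRing 𝔤] [LieAlgebra ℝ 𝔤] (ρ : 𝔤 →ₗ⁅ℝ⁆ C.X)
  (n : ℕ) (ω : C.carrier)

def Good (f : ℕ → ExteriorAlgebra ℝ 𝔤 →ₗ[ℝ] C.carrier) (k : ℕ) : Prop :=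
  ∀ i, 1 ≤ i → i ≤ k → ∀ u ∈ (⋀[ℝ]^i 𝔤), f i u ∈ C.deg ((n : ℤ) - (i : ℤ)) ∧
    C.d (f i u) = (-1 : ℝ) ^ i • contr C ρ u ω - f (i - 1) (bd u)

noncomputable def Rm (f : ℕ → ExteriorAlgebra ℝ 𝔤 →ₗ[ℝ] C.carrier) (k : ℕ) :
    ExteriorAlgebra ℝ 𝔤 →ₗ[ℝ] C.carrier :=
  (-1 : ℝ) ^ (k + 1) • (LinearMap.applyₗ ω ∘ₗ (contr C ρ).toLinearMap) - f k ∘ₗ bd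

lemma Rm_apply (f : ℕ → ExteriorAlgebra ℝ 𝔤 →ₗ[ℝ] C.carrier) (k : ℕ) (u) :
    Rm C ρ ω f k u = (-1 : ℝ) ^ (k + 1) • contr C ρ u ω - f k (bd u) := rfl

variable {C ρ n ω}

lemma Rm_good (hω : ω ∈ C.deg ((n : ℤ) + 1)) (hcl : C.d ω = 0)
    (hinv : ∀ x : 𝔤, C.L (ρ x) ω = 0) {f : ℕ → ExteriorAlgebra ℝ 𝔤 →ₗ[ℝ] C.carrier} {k : ℕ}
    (hf : Good C ρ n ω f k) (u) (hu : u ∈ (⋀[ℝ]^(k+1) 𝔤)) :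
    Rm C ρ ω f k u ∈ C.deg ((n : ℤ) - (k : ℤ)) ∧ C.d (Rm C ρ ω f k u) = 0 := by
  have hP := contr_deg C ρ _ ω hω (k+1) u hu
  have e : (n : ℤ) + 1 - ((k + 1 : ℕ) : ℤ) = (n : ℤ) - (k : ℤ) := by push_cast; ring
  rw [e] at hP
  rw [Rm_apply]
  rcases Nat.eq_zero_or_pos k with rfl | hk
  · have hb := bd_deg_one u hu
    rw [hb, map_zero, sub_zero]
    refine ⟨Submodule.smul_mem _ _ hP, ?_⟩
    rw [map_smul, d_contr C ρ ω hcl hinv, hb]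
    simp
  · obtain ⟨h1, h2⟩ := hf k hk le_rfl (bd u) (bd_mem k hu)
    refine ⟨Submodule.sub_mem _ (Submodule.smul_mem _ _ hP) h1, ?_⟩
    rw [map_sub, map_smul, d_contr C ρ ω hcl hinv, h2, bd_bd, map_zero, pow_succ]
    simp

lemma fix (hω : ω ∈ C.deg ((n : ℤ) + 1)) (hcl : C.d ω = 0)
    (hinv : ∀ x : 𝔤, C.L (ρ x) ω = 0) {f : ℕ → ExteriorAlgebra ℝ 𝔤 →ₗ[ℝ] C.carrier} {k : ℕ}
    (hf : Good C ρ n ω f k) : ∃ f', Good C ρ n ω f' k ∧ ∀ u ∈ (⋀[ℝ]^(k+1) 𝔤),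
      ∃ u' ∈ (⋀[ℝ]^(k+1) 𝔤), bd u' = 0 ∧
        Rm C ρ ω f' k u = (-1 : ℝ) ^ (k + 1) • contr C ρ u' ω := by
  obtain ⟨σ, hσ⟩ := gen_inv (bd ∘ₗ (⋀[ℝ]^(k+1) 𝔤).subtype)
  refine ⟨Function.update f k (f k + Rm C ρ ω f k ∘ₗ (⋀[ℝ]^(k+1) 𝔤).subtype ∘ₗ σ), ?_, ?_⟩
  · intro i h1 h2 u hu
    have hi : i - 1 ≠ k := by omega
    rw [Function.update_of_ne hi]
    rcases eq_or_ne i k with rfl | hne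
    · rw [Function.update_self]
      obtain ⟨a1, a2⟩ := hf i h1 h2 u hu
      obtain ⟨b1, b2⟩ := Rm_good hω hcl hinv hf (σ u : ExteriorAlgebra ℝ 𝔤) (σ u).2
      refine ⟨Submodule.add_mem _ a1 b1, ?_⟩
      change C.d (f i u + Rm C ρ ω f i (σ u : ExteriorAlgebra ℝ 𝔤)) = _
      rw [map_add, a2, b2, add_zero]
    · rw [Function.update_of_ne hne]
      exact hf i h1 h2 u hu
  · intro u hu
    have h := hσ ⟨u, hu⟩
    simp only [LinearMap.comp_apply, Submodule.subtype_apply] at h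
    have h0 : bd (u - (σ (bd u) : ExteriorAlgebra ℝ 𝔤)) = 0 := by
      rw [map_sub, h, sub_self]
    refine ⟨u - (σ (bd u) : ExteriorAlgebra ℝ 𝔤), Submodule.sub_mem _ hu (σ (bd u)).2, h0, ?_⟩
    have h3 : Rm C ρ ω f k (u - (σ (bd u) : ExteriorAlgebra ℝ 𝔤))
        = (-1 : ℝ) ^ (k + 1) • contr C ρ (u - (σ (bd u) : ExteriorAlgebra ℝ 𝔤)) ω := by
      rw [Rm_apply, h0, map_zero, sub_zero]
    rw [← h3, map_sub, Rm_apply, Function.update_self, Rm_apply C ρ ω f k u]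
    change _ - (f k (bd u) + Rm C ρ ω f k (σ (bd u) : ExteriorAlgebra ℝ 𝔤)) = _
    abel

lemma step {f : ℕ → ExteriorAlgebra ℝ 𝔤 →ₗ[ℝ] C.carrier} {k : ℕ}
    (hf : Good C ρ n ω f k)
    (hex : ∀ u ∈ (⋀[ℝ]^(k+1) 𝔤), ∃ b ∈ C.deg ((n : ℤ) - (k : ℤ) - 1), C.d b = Rm C ρ ω f k u) :
    ∃ f', Good C ρ n ω f' (k + 1) := by
  obtain ⟨σ, hσ⟩ := gen_inv (C.d ∘ₗ (C.deg ((n : ℤ) - (k : ℤ) - 1)).subtype)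
  have hd : ∀ u ∈ (⋀[ℝ]^(k+1) 𝔤),
      C.d (σ (Rm C ρ ω f k u) : C.carrier) = Rm C ρ ω f k u := by
    intro u hu
    obtain ⟨b, hb, h⟩ := hex u hu
    have := hσ ⟨b, hb⟩
    simp only [LinearMap.comp_apply, Submodule.subtype_apply] at this
    rwa [h] at this
  refine ⟨Function.update f (k+1)
    ((C.deg ((n : ℤ) - (k : ℤ) - 1)).subtype ∘ₗ σ ∘ₗ Rm C ρ ω f k), ?_⟩
  intro i h1 h2 u hu
  have hi : i - 1 ≠ k + 1 := by omega
  rw [Function.update_of_ne hi]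
  rcases eq_or_ne i (k+1) with rfl | hne
  · rw [Function.update_self]
    constructor
    · have e : (n : ℤ) - ((k + 1 : ℕ) : ℤ) = (n : ℤ) - (k : ℤ) - 1 := by push_cast; ring
      rw [e]
      exact (σ (Rm C ρ ω f k u)).2
    · exact (hd u hu).trans (Rm_apply C ρ ω f k u)
  · rw [Function.update_of_ne hne]
    exact hf i h1 (by omega) u hu

variable (C ρ n ω)

lemma main
    (hω : ω ∈ C.deg ((n : ℤ) + 1)) (hcl : C.d ω = 0)
    (hinv : ∀ x : 𝔤, C.L (ρ x) ω = 0)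
    (ε : C.deg 0 →ₗ[ℝ] ℝ)
    (hεinj : ∀ a : C.deg 0, C.d (a : C.carrier) = 0 → ε a = 0 → (a : C.carrier) = 0)
    (hvanish : ∀ j : ℕ, j + 1 ≤ n →
      (∀ ψ : (Fin (j + 1) → 𝔤) → ℝ, IsMultilinear ψ → IsAlternating ψ →
        (∀ x : Fin (j + 2) → 𝔤, dCE (j + 1) ψ x = 0) →
        ∃ χ : (Fin j → 𝔤) → ℝ, IsMultilinear χ ∧ IsAlternating χ ∧
          ∀ x : Fin (j + 1) → 𝔤, dCE j χ x = ψ x) ∨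
      (∀ a : C.carrier, a ∈ C.deg ((n : ℤ) - (j : ℤ)) → C.d a = 0 →
        ∃ b : C.carrier, b ∈ C.deg ((n : ℤ) - (j : ℤ) - 1) ∧ C.d b = a))
    (hcobound : ∃ ψ : (Fin n → 𝔤) → ℝ, IsMultilinear ψ ∧ IsAlternating ψ ∧
      ∀ x : Fin (n + 1) → 𝔤, dCE n ψ x = obstructionCocycle C ρ n ω hω ε x) :
    ∃ f, Good C ρ n ω f n ∧ ∀ u ∈ (⋀[ℝ]^(n+1) 𝔤), Rm C ρ ω f n u = 0 := by
  have key : ∀ k, k ≤ n → ∃ f, Good C ρ n ω f k := by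
    intro k
    induction k with
    | zero => exact fun _ => ⟨0, fun i h1 h2 => by omega⟩
    | succ k ih =>
      intro hk
      obtain ⟨f, hf⟩ := ih (by omega)
      rcases hvanish k hk with H | H
      · obtain ⟨f', hf', h⟩ := fix hω hcl hinv hf
        refine step hf' fun u hu => ?_
        obtain ⟨u', hu', hb, hR⟩ := h u hu
        obtain ⟨w, hw, rfl⟩ := exact_of_CE k H u' hu' hb
        have hP := contr_deg C ρ _ ω hω (k+2) w hw
        have e : (n : ℤ) + 1 - ((k + 2 : ℕ) : ℤ) = (n : ℤ) - (k : ℤ) - 1 := by push_cast; ring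
        rw [e] at hP
        refine ⟨(-1 : ℝ) ^ k • contr C ρ w ω, Submodule.smul_mem _ _ hP, ?_⟩
        rw [map_smul, d_contr C ρ ω hcl hinv, hR, pow_succ]
        simp
      · refine step hf fun u hu => ?_
        obtain ⟨h1, h2⟩ := Rm_good hω hcl hinv hf u hu
        exact H _ h1 h2
  obtain ⟨f, hf⟩ := key n le_rfl
  obtain ⟨f', hf', h⟩ := fix hω hcl hinv hf
  refine ⟨f', hf', fun u hu => ?_⟩
  obtain ⟨u', hu', hb, hR⟩ := h u hu
  obtain ⟨ψ, hm, ha, hψ⟩ := hcobound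
  obtain ⟨Ψ, hΨ⟩ := exists_lin ψ hm ha
  obtain ⟨ε', hε'⟩ := LinearMap.exists_extend ε
  have hε : ∀ a : C.deg 0, ε' a = ε a := fun a => LinearMap.congr_fun hε' a
  have hle : (⋀[ℝ]^(n+1) 𝔤) ≤ LinearMap.ker
      (ε' ∘ₗ (LinearMap.applyₗ ω ∘ₗ (contr C ρ).toLinearMap)
        - (-1 : ℝ) ^ ((n + 1) * (n + 1 - 1) / 2) • Ψ ∘ₗ bd) := by
    refine span_ind _ fun x => ?_
    rw [LinearMap.mem_ker]
    change ε' (contr C ρ (ExteriorAlgebra.ιMulti ℝ (n+1) x) ω) - (-1 : ℝ) ^ ((n + 1) * (n + 1 - 1) / 2) •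
      Ψ (bd (ExteriorAlgebra.ιMulti ℝ (n+1) x)) = 0
    rw [← dCE_eq n ψ Ψ hΨ, hψ, contr_eq_lower, map_smul, obstructionCocycle, ← hε, sub_self]
  have h0 : ε' (contr C ρ u' ω) - (-1 : ℝ) ^ ((n + 1) * (n + 1 - 1) / 2) • Ψ (bd u') = 0 :=
    hle hu'
  rw [hb, map_zero, smul_zero, sub_zero] at h0
  have hP := contr_deg C ρ _ ω hω (n+1) u' hu'
  have e : (n : ℤ) + 1 - ((n + 1 : ℕ) : ℤ) = 0 := by push_cast; ring
  rw [e] at hP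
  have hz := hεinj ⟨contr C ρ u' ω, hP⟩
    (by
      change C.d (contr C ρ u' ω) = 0
      rw [d_contr C ρ ω hcl hinv, hb]; simp) (by rw [← hε]; exact h0)
  change contr C ρ u' ω = 0 at hz
  rw [hR, hz, smul_zero]

end main
end MM

/-- existence criterion, §5 of the paper. Assume `𝔤` is
finite-dimensional, `ε : Ω^0 → ℝ` restricts to a linear isomorphism
`ker(d : Ω^0 → Ω^1) ≅ ℝ`, for each `j = 1,…,n` (written `j+1`, `j+1 ≤ n`… with
`j` ranging so that `j+1 ∈ {1,…,n}`) one of `H^{j+1}_CE(𝔤)` and `H^{n-j}(Ω)`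
vanishes (the vanishing of the tensor product `H^{j+1}_CE(𝔤) ⊗ H^{n-j}(Ω)` of
real vector spaces), and the obstruction cocycle `c` is a `d_𝔤`-coboundary.
Then a homotopy moment map for `ω` exists. -/
theorem momentMap_exists (C : CartanCalculus) {𝔤 : Type} [LieRing 𝔤]
    [LieAlgebra ℝ 𝔤] [FiniteDimensional ℝ 𝔤] (ρ : 𝔤 →ₗ⁅ℝ⁆ C.X) (n : ℕ) (hn : 1 ≤ n)
    (ω : C.carrier) (hω : ω ∈ C.deg ((n : ℤ) + 1)) (hcl : C.d ω = 0)
    (hinv : ∀ x : 𝔤, C.L (ρ x) ω = 0)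
    (ε : C.deg 0 →ₗ[ℝ] ℝ)
    (hεinj : ∀ a : C.deg 0, C.d (a : C.carrier) = 0 → ε a = 0 → (a : C.carrier) = 0)
    (hεsurj : ∀ r : ℝ, ∃ a : C.deg 0, C.d (a : C.carrier) = 0 ∧ ε a = r)
    (hvanish : ∀ j : ℕ, j + 1 ≤ n →
      -- `H^{j+1}_CE(𝔤) = 0`: every alternating multilinear cocycle is a coboundary
      (∀ ψ : (Fin (j + 1) → 𝔤) → ℝ, IsMultilinear ψ → IsAlternating ψ →
        (∀ x : Fin (j + 2) → 𝔤, dCE (j + 1) ψ x = 0) →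
        ∃ χ : (Fin j → 𝔤) → ℝ, IsMultilinear χ ∧ IsAlternating χ ∧
          ∀ x : Fin (j + 1) → 𝔤, dCE j χ x = ψ x) ∨
      -- `H^{n-j}(Ω) = 0`: every closed element of `Ω^{n-j}` is exact
      (∀ a : C.carrier, a ∈ C.deg ((n : ℤ) - (j : ℤ)) → C.d a = 0 →
        ∃ b : C.carrier, b ∈ C.deg ((n : ℤ) - (j : ℤ) - 1) ∧ C.d b = a))
    (hcobound : ∃ ψ : (Fin n → 𝔤) → ℝ, IsMultilinear ψ ∧ IsAlternating ψ ∧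
      ∀ x : Fin (n + 1) → 𝔤, dCE n ψ x = obstructionCocycle C ρ n ω hω ε x) :
    ∃ f : (k : ℕ) → (Fin k → 𝔤) → C.carrier, IsMomentMap C ρ n ω f := by
  obtain ⟨f, hf, hz⟩ := MM.main C ρ n ω hω hcl hinv ε hεinj hvanish hcobound
  refine ⟨fun k x => f k (ExteriorAlgebra.ιMulti ℝ k x), ?_, ?_, ?_, ?_⟩
  · intro k h1 h2
    exact ⟨MM.isMultilinear_lin k (f k), MM.isAlternating_lin k (f k),
      fun x => (hf k h1 h2 _ (MM.ιMulti_mem k x)).1⟩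
  · intro x
    have h := (hf 1 le_rfl hn _ (MM.ιMulti_mem 1 (fun _ => x))).2
    rw [MM.bd_deg_one _ (MM.ιMulti_mem 1 _), map_zero, sub_zero] at h
    refine h.trans ?_
    have h1 : ExteriorAlgebra.ιMulti ℝ 1 (fun _ : Fin 1 => x) = ExteriorAlgebra.ι ℝ x * 1 := by
      rw [ExteriorAlgebra.ιMulti_apply]; simp
    rw [h1, MM.contr_mul]
    simp
  · intro k h1 h2 x
    obtain ⟨m, rfl⟩ : ∃ m, k = m + 1 := ⟨k - 1, by omega⟩
    have h := (hf (m+1) (by omega) h2 _ (MM.ιMulti_mem (m+1) x)).2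
    rw [MM.varsigma_lower, h]
    refine (MM.neg_dCE m _ (f m) (fun _ => rfl) x).trans ?_
    rw [Nat.add_sub_cancel]
    abel
  · intro x
    have h := hz _ (MM.ιMulti_mem (n+1) x)
    rw [MM.Rm_apply] at h
    rw [MM.varsigma_lower, MM.neg_dCE n _ (f n) (fun _ => rfl), sub_eq_zero.mp h]
end
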